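/- arXiv:1412.6908 — 4 statements merged into one kernel-verified Lean document; each statement's English description precedes it below -/
import Mathlib

section
/- Every echelon subgroup H of the free group F_n of finite rank n is the image of F_n under an endomorphism obtained by performing at most n successive 1-generator subgroup endomorphisms: there exists a descending chain of subgroups F_n = H_0 ≥ H_1 ≥ ⋯ ≥ H_m = H with m ≤ n such that for each k the subgroup H_k is the image of H_{k−1} under a 1-generator subgroup endomorphism of H_{k−1}. -/
/-- The rank of a subgroup: the minimal cardinality of a generating set.
For subgroups of free groups (which are free by Nielsen–Schreier) this is the
cardinality of a free basis. -/
noncomputable def rk {G : Type*} [Group G] (H : Subgroup G) : Cardinal :=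
  ⨅ S : {S : Set G // Subgroup.closure S = H}, Cardinal.mk S.1

/-- A subgroup `H` is inert if `rk (H ⊓ K) ≤ rk K` for every finitely generated `K`. -/
def IsInert {G : Type*} [Group G] (H : Subgroup G) : Prop :=
  ∀ K : Subgroup G, K.FG → rk (H ⊓ K) ≤ rk K

/-- `stage x i` is the subgroup generated by the first `i` elements of `x`. -/
def stage {n : ℕ} {F : Type*} [Group F] (x : Fin n → F) (i : ℕ) : Subgroup F :=
  Subgroup.closure (x '' {j | (j : ℕ) < i})

/-- `x` is an ordered free basis of `F`. -/
def IsOrderedBasis {n : ℕ} {F : Type*} [Group F] (x : Fin n → F) : Prop :=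
  Function.Bijective (FreeGroup.lift x)

/-- `H` is in echelon form with respect to the ordered basis `x`:
`rk (H ⊓ F_i) ≤ rk (H ⊓ F_{i-1}) + 1` for `i = 1, …, n`. -/
def InEchelonForm {n : ℕ} {F : Type*} [Group F] (x : Fin n → F) (H : Subgroup F) : Prop :=
  ∀ i : ℕ, i < n → rk (H ⊓ stage x (i + 1)) ≤ rk (H ⊓ stage x i) + 1

/-- `H` is an echelon subgroup: it is in echelon form with respect to
some ordered free basis. -/
def IsEchelon {n : ℕ} (H : Subgroup (FreeGroup (Fin n))) : Prop :=
  ∃ x : Fin n → FreeGroup (Fin n), IsOrderedBasis x ∧ InEchelonForm x H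

/-- A 1-generator (subgroup) endomorphism: an endomorphism fixing all but (possibly)
one member of some set of free generators. -/
def IsOneGenEndo {G : Type*} [Group G] (φ : G →* G) : Prop :=
  ∃ (ι : Type) (b : FreeGroupBasis ι G) (s : Set ι),
    s.Subsingleton ∧ ∀ i ∉ s, φ (b i) = b i

/-- The subgroup of points fixed by an endomorphism. -/
def fixedSubgroup {G : Type*} [Group G] (φ : G →* G) : Subgroup G where
  carrier := {g | φ g = g}
  one_mem' := by simp
  mul_mem' := by intro a b ha hb; simp only [Set.mem_setOf_eq, map_mul] at *; rw [ha, hb]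
  inv_mem' := by intro a ha; simp only [Set.mem_setOf_eq, map_inv] at *; rw [ha]

/-- An element is primitive if it belongs to some free basis. -/
def IsPrimitive {n : ℕ} (g : FreeGroup (Fin n)) : Prop :=
  ∃ x : Fin n → FreeGroup (Fin n), IsOrderedBasis x ∧ ∃ j, x j = g

/-!
Let `x` be an ordered free basis of `F` with respect to which `H` is in echelon form. The chain is
`F = F_n ⊔ H ≥ F_{n-1} ⊔ H ≥ ⋯ ≥ F_0 ⊔ H = H`, where `F_i = stage x i`.

Because `K ⊓ F_i` is a free factor of `K` for every subgroup `K`, echelon form says that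
`H ⊓ F_{i+1}` is generated by `H ⊓ F_i` and one further element `h_i`, which is either trivial or
outside `F_i`. Hence `F_k ⊔ H` is generated by `x_0, …, x_{k-1}, h_k, …, h_{n-1}`. In such a
triangular family every nontrivial member raises the rank of the intersection with the next stage,
so the number of nontrivial members is at most the rank of the subgroup they generate; as free
groups of finite rank are Hopfian, they form a free basis of it. Replacing the basis element `x_k`
by `h_k` then maps `F_{k+1} ⊔ H` onto `F_k ⊔ H`.

That `K ⊓ closure (x '' S)` is a free factor of `K` follows from Schreier's method, applied to a
spanning tree whose paths use as few letters outside `S` as possible.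
-/

universe u v w

section Words

variable {ι : Type u}

theorem mk_cons_true (i : ι) (M : List (ι × Bool)) :
    FreeGroup.mk ((i, true) :: M) = FreeGroup.of i * FreeGroup.mk M :=
  (FreeGroup.mul_mk (L₁ := [(i, true)])).symm

theorem mk_cons_false (i : ι) (M : List (ι × Bool)) :
    FreeGroup.mk ((i, false) :: M) = (FreeGroup.of i)⁻¹ * FreeGroup.mk M := by
  rw [FreeGroup.of, FreeGroup.inv_mk, FreeGroup.mul_mk]
  rfl

theorem mk_mem_closure_of_image {S : Set ι} {L : List (ι × Bool)} (hL : ∀ p ∈ L, p.1 ∈ S) :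
    FreeGroup.mk L ∈ Subgroup.closure (FreeGroup.of '' S) := by
  induction L with
  | nil => exact one_mem _
  | cons p L ih =>
    have of_mem : FreeGroup.of p.1 ∈ Subgroup.closure (FreeGroup.of '' S) :=
      Subgroup.subset_closure ⟨p.1, hL p List.mem_cons_self, rfl⟩
    have mk_mem := ih fun q hq ↦ hL q (List.mem_cons_of_mem p hq)
    obtain ⟨i, _ | _⟩ := p
    · exact mk_cons_false i L ▸ mul_mem (inv_mem of_mem) mk_mem
    · exact mk_cons_true i L ▸ mul_mem of_mem mk_mem

theorem exists_mk_eq_of_mem_closure_image {S : Set ι} {g : FreeGroup ι}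
    (hg : g ∈ Subgroup.closure (FreeGroup.of '' S)) :
    ∃ L, FreeGroup.mk L = g ∧ ∀ p ∈ L, p.1 ∈ S := by
  have range_map_eq : (FreeGroup.map ((↑) : S → ι)).range =
      Subgroup.closure (FreeGroup.of '' S) := by
    rw [FreeGroup.range_map, Subtype.range_coe]
  rw [← range_map_eq] at hg
  obtain ⟨w, rfl⟩ := hg
  obtain ⟨L, rfl⟩ := Quot.exists_rep w
  refine ⟨L.map fun p ↦ (↑p.1, p.2), FreeGroup.map.mk.symm, fun p hp ↦ ?_⟩
  obtain ⟨q, -, rfl⟩ := List.mem_map.1 hp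
  exact q.1.2

end Words

section Cocycle

variable {ι : Type u} {V : Type v} {Q : Type w} [MulAction (FreeGroup ι) V] [Group Q]

/-- The homomorphism to the (unrestricted) wreath product of `Q` by `FreeGroup ι` that encodes the
labelling `f` of the Schreier graph on `V`: the edge from `v` to `of i • v` has label `f v i`. -/
def cocycleHom (f : V → ι → Q) : FreeGroup ι →* (V → Q) ⋊[mulAutArrow] FreeGroup ι :=
  FreeGroup.lift fun i ↦ ⟨fun v ↦ f ((FreeGroup.of i)⁻¹ • v) i, FreeGroup.of i⟩

/-- The product of the labels `f` along the path from `v` to `g • v` spelled by `g` in the Schreier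
graph on `V`. The paths are read from right to left, so that this is a left cocycle. -/
def cocycle (f : V → ι → Q) (g : FreeGroup ι) (v : V) : Q :=
  (cocycleHom f g).left (g • v)

theorem cocycleHom_right (f : V → ι → Q) (g : FreeGroup ι) : (cocycleHom f g).right = g := by
  have rightHom_comp : SemidirectProduct.rightHom.comp (cocycleHom f) = MonoidHom.id _ := by
    ext i
    simp [cocycleHom]
  exact DFunLike.congr_fun rightHom_comp g

theorem cocycle_of (f : V → ι → Q) (i : ι) (v : V) : cocycle f (FreeGroup.of i) v = f v i := by
  simp [cocycle, cocycleHom]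

theorem cocycle_one (f : V → ι → Q) (v : V) : cocycle f 1 v = 1 := by
  simp [cocycle]

theorem cocycle_mul (f : V → ι → Q) (g h : FreeGroup ι) (v : V) :
    cocycle f (g * h) v = cocycle f g (h • v) * cocycle f h v := by
  rw [cocycle, map_mul, SemidirectProduct.mul_left, cocycleHom_right, mul_smul]
  change _ * (cocycleHom f h).left (g⁻¹ • g • h • v) = _
  rw [inv_smul_smul]
  rfl

theorem cocycle_inv (f : V → ι → Q) (g : FreeGroup ι) (v : V) :
    cocycle f g⁻¹ v = (cocycle f g (g⁻¹ • v))⁻¹ := by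
  apply eq_inv_of_mul_eq_one_right
  rw [← cocycle_mul, mul_inv_cancel, cocycle_one]

/-- The restriction of `cocycle f` to the loops at `v₀`, on which it is a homomorphism. -/
def loopHom (f : V → ι → Q) (v₀ : V) : MulAction.stabilizer (FreeGroup ι) v₀ →* Q where
  toFun g := cocycle f g v₀
  map_one' := cocycle_one f v₀
  map_mul' g h := by
    rw [Subgroup.coe_mul, cocycle_mul, MulAction.mem_stabilizer_iff.1 h.2]

end Cocycle

/-- A Schreier transversal for the action of `FreeGroup ι` on the orbit `V` of `v₀`: a choice of a
word leading from `v₀` to each point that is closed under suffixes. Equivalently, it is a spanning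
tree of the Schreier graph; words act from the left, which is why suffixes play the usual role of
prefixes. -/
structure SchreierTransversal {ι : Type u} {V : Type v} [MulAction (FreeGroup ι) V] (v₀ : V) where
  word : V → List (ι × Bool)
  mk_word_smul : ∀ v, FreeGroup.mk (word v) • v₀ = v
  word_mk_smul_of_suffix : ∀ {v M}, M <:+ word v → word (FreeGroup.mk M • v₀) = M

namespace SchreierTransversal

variable {ι : Type u} {V : Type v} [MulAction (FreeGroup ι) V] {v₀ : V}
  (T : SchreierTransversal (ι := ι) v₀)

/-- The element of the free group spelled by the path in the tree from `v₀` to `v`. -/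
def path (v : V) : FreeGroup ι :=
  FreeGroup.mk (T.word v)

theorem path_smul (v : V) : T.path v • v₀ = v :=
  T.mk_word_smul v

theorem path_inv_smul (v : V) : (T.path v)⁻¹ • v = v₀ := by
  rw [inv_smul_eq_iff, path_smul]

theorem path_mk_smul_of_suffix {v : V} {M : List (ι × Bool)} (hM : M <:+ T.word v) :
    T.path (FreeGroup.mk M • v₀) = FreeGroup.mk M :=
  congrArg FreeGroup.mk (T.word_mk_smul_of_suffix hM)

theorem path_self : T.path v₀ = 1 := by
  simpa [← FreeGroup.one_eq_mk] using T.path_mk_smul_of_suffix (List.nil_suffix (l := T.word v₀))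

/-- The loop at `v₀` that follows the tree to `v`, then `g`, then the tree back to `v₀`. -/
def loop (g : FreeGroup ι) (v : V) : FreeGroup ι :=
  (T.path (g • v))⁻¹ * g * T.path v

theorem loop_smul (g : FreeGroup ι) (v : V) : T.loop g v • v₀ = v₀ := by
  rw [loop, mul_smul, mul_smul, path_smul, path_inv_smul]

theorem loop_one (v : V) : T.loop 1 v = 1 := by
  simp [loop]

theorem loop_mul (g h : FreeGroup ι) (v : V) :
    T.loop (g * h) v = T.loop g (h • v) * T.loop h v := by
  simp only [loop, mul_smul]
  group

theorem loop_inv (g : FreeGroup ι) (v : V) : T.loop g⁻¹ v = (T.loop g (g⁻¹ • v))⁻¹ := by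
  simp only [loop, smul_inv_smul]
  group

theorem loop_eq_self {g : FreeGroup ι} (hg : g • v₀ = v₀) : T.loop g v₀ = g := by
  simp [loop, hg, path_self]

/-- The edges of the Schreier graph outside the spanning tree. The pair `(v, i)` stands for the edge
from `v` to `of i • v`. -/
def Chord : Type max u v :=
  {p : V × ι // T.loop (FreeGroup.of p.2) p.1 ≠ 1}

/-- The Schreier generator attached to a chord. -/
def chordLoop (c : T.Chord) : FreeGroup ι :=
  T.loop (FreeGroup.of c.1.2) c.1.1

theorem chordLoop_mem_stabilizer (c : T.Chord) :
    T.chordLoop c ∈ MulAction.stabilizer (FreeGroup ι) v₀ :=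
  T.loop_smul _ _

open Classical in
/-- The labelling of the Schreier graph by which loops at `v₀` are written as products of Schreier
generators: a chord is its own label, and the edges of the tree have trivial label. -/
noncomputable def chordLabel (v : V) (i : ι) : FreeGroup T.Chord :=
  if h : T.loop (FreeGroup.of i) v ≠ 1 then FreeGroup.of ⟨(v, i), h⟩ else 1

theorem chordLabel_eq_one {v : V} {i : ι} (h : T.loop (FreeGroup.of i) v = 1) :
    T.chordLabel v i = 1 :=
  dif_neg (not_not.2 h)

theorem chordLabel_chord (c : T.Chord) : T.chordLabel c.1.1 c.1.2 = FreeGroup.of c :=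
  dif_pos c.2

theorem cocycle_chordLabel_mk_of_suffix {v : V} {M : List (ι × Bool)} (hM : M <:+ T.word v) :
    cocycle T.chordLabel (FreeGroup.mk M) v₀ = 1 := by
  induction M with
  | nil => exact cocycle_one _ _
  | cons p M ih =>
    have hM' : M <:+ T.word v := (List.suffix_cons p M).trans hM
    have path_tail := T.path_mk_smul_of_suffix hM'
    have path_cons := T.path_mk_smul_of_suffix hM
    obtain ⟨i, _ | _⟩ := p
    · rw [mk_cons_false, mul_smul] at path_cons
      rw [mk_cons_false, cocycle_mul, ih hM', mul_one, cocycle_inv, cocycle_of, inv_eq_one]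
      apply T.chordLabel_eq_one
      simp only [loop, smul_inv_smul, path_tail, path_cons]
      group
    · rw [mk_cons_true, mul_smul] at path_cons
      rw [mk_cons_true, cocycle_mul, ih hM', mul_one, cocycle_of]
      apply T.chordLabel_eq_one
      simp only [loop, path_tail, path_cons]
      group

theorem cocycle_chordLabel_path (v : V) : cocycle T.chordLabel (T.path v) v₀ = 1 :=
  T.cocycle_chordLabel_mk_of_suffix List.suffix_rfl

theorem cocycle_chordLabel_chordLoop (c : T.Chord) :
    cocycle T.chordLabel (T.chordLoop c) v₀ = FreeGroup.of c := by
  rw [chordLoop, loop, cocycle_mul, path_smul, cocycle_mul, cocycle_inv, path_inv_smul,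
    cocycle_chordLabel_path, cocycle_chordLabel_path, cocycle_of, chordLabel_chord, inv_one,
    one_mul, mul_one]

theorem lift_chordLoop_injective : Function.Injective (FreeGroup.lift T.chordLoop) := by
  let generator (c : T.Chord) : MulAction.stabilizer (FreeGroup ι) v₀ :=
    ⟨T.chordLoop c, T.chordLoop_mem_stabilizer c⟩
  have loopHom_comp_lift :
      (loopHom T.chordLabel v₀).comp (FreeGroup.lift generator) = MonoidHom.id _ := by
    ext c
    rw [MonoidHom.comp_apply, FreeGroup.lift_apply_of]
    exact T.cocycle_chordLabel_chordLoop c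
  have lift_eq : FreeGroup.lift T.chordLoop =
      (MulAction.stabilizer (FreeGroup ι) v₀).subtype.comp (FreeGroup.lift generator) := by
    ext c
    simp [generator]
  rw [lift_eq]
  exact Subtype.val_injective.comp (Function.LeftInverse.injective
    (g := loopHom T.chordLabel v₀) (DFunLike.congr_fun loopHom_comp_lift))

/-- The paths of the tree to the points that the letters in `S` can reach use only such letters, so
that the tree restricts to a spanning tree of the component of `v₀` in the Schreier graph of
`closure (of '' S)`. -/
def IsAdapted (S : Set ι) : Prop :=
  ∀ a ∈ Subgroup.closure (FreeGroup.of '' S),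
    T.path (a • v₀) ∈ Subgroup.closure (FreeGroup.of '' S)

/-- The chords in the component of `v₀` of the Schreier graph of `closure (of '' S)`. -/
def chordsOver (S : Set ι) : Set T.Chord :=
  {c | (∃ a ∈ Subgroup.closure (FreeGroup.of '' S), a • v₀ = c.1.1) ∧ c.1.2 ∈ S}

theorem loop_mem_closure_chordLoop {S : Set ι} {g : FreeGroup ι}
    (hg : g ∈ Subgroup.closure (FreeGroup.of '' S)) :
    ∀ a ∈ Subgroup.closure (FreeGroup.of '' S),
      T.loop g (a • v₀) ∈ Subgroup.closure (T.chordLoop '' T.chordsOver S) := by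
  induction hg using Subgroup.closure_induction with
  | mem x hx =>
    obtain ⟨i, hi, rfl⟩ := hx
    intro a ha
    by_cases loop_eq_one : T.loop (FreeGroup.of i) (a • v₀) = 1
    · exact loop_eq_one ▸ one_mem _
    · exact Subgroup.subset_closure ⟨⟨(a • v₀, i), loop_eq_one⟩, ⟨⟨a, ha, rfl⟩, hi⟩, rfl⟩
  | one => exact fun a _ ↦ (T.loop_one (a • v₀)).symm ▸ one_mem _
  | mul g h _ hh ihg ihh =>
    intro a ha
    rw [loop_mul, ← mul_smul]
    exact mul_mem (ihg _ (mul_mem hh ha)) (ihh a ha)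
  | inv g hg ih =>
    intro a ha
    rw [loop_inv, ← mul_smul]
    exact inv_mem (ih _ (mul_mem (inv_mem hg) ha))

theorem IsAdapted.closure_chordLoop {T : SchreierTransversal (ι := ι) v₀} {S : Set ι}
    (hT : T.IsAdapted S) :
    Subgroup.closure (T.chordLoop '' T.chordsOver S) =
      MulAction.stabilizer (FreeGroup ι) v₀ ⊓ Subgroup.closure (FreeGroup.of '' S) := by
  apply le_antisymm
  · rw [Subgroup.closure_le]
    rintro _ ⟨c, ⟨⟨a, ha, hac⟩, hi⟩, rfl⟩
    have of_mem : FreeGroup.of c.1.2 ∈ Subgroup.closure (FreeGroup.of '' S) :=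
      Subgroup.subset_closure ⟨_, hi, rfl⟩
    refine Subgroup.mem_inf.2 ⟨T.chordLoop_mem_stabilizer c, ?_⟩
    rw [chordLoop, loop, ← hac, ← mul_smul]
    exact mul_mem (mul_mem (inv_mem (hT _ (mul_mem of_mem ha))) of_mem) (hT a ha)
  · rintro g ⟨g_smul, hg⟩
    simpa [T.loop_eq_self g_smul] using T.loop_mem_closure_chordLoop hg 1 (one_mem _)

theorem closure_range_chordLoop :
    Subgroup.closure (Set.range T.chordLoop) = MulAction.stabilizer (FreeGroup ι) v₀ := by
  have closure_univ : Subgroup.closure (FreeGroup.of '' (Set.univ : Set ι)) = ⊤ := by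
    rw [Set.image_univ, FreeGroup.closure_range_of]
  have isAdapted_univ : T.IsAdapted Set.univ := fun _ _ ↦ closure_univ ▸ Subgroup.mem_top _
  have chordsOver_univ : T.chordsOver Set.univ = Set.univ := Set.eq_univ_of_forall fun c ↦
    ⟨⟨T.path c.1.1, closure_univ ▸ Subgroup.mem_top _, T.path_smul _⟩, Set.mem_univ _⟩
  simpa [chordsOver_univ, closure_univ] using isAdapted_univ.closure_chordLoop

end SchreierTransversal

section MinimalTransversal

variable {ι : Type u}

/-- The well-order of words that compares first the number of letters outside `S`, then the length.
The least words leading to the points of a Schreier graph form a transversal adapted to `S`. -/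
def WordLT (S : Set ι) : List (ι × Bool) → List (ι × Bool) → Prop :=
  open Classical in InvImage (Prod.Lex (· < ·) (List.Shortlex WellOrderingRel))
    fun L ↦ (L.countP (·.1 ∉ S), L)

theorem wordLT_wf (S : Set ι) : WellFounded (WordLT S) :=
  InvImage.wf _ <| WellFounded.prod_lex wellFounded_lt <|
    List.Shortlex.wf WellOrderingRel.isWellOrder.wf

theorem wordLT_trichotomous (S : Set ι) : Std.Trichotomous (WordLT S) :=
  InvImage.trichotomous fun _ _ h ↦ congrArg Prod.snd h

theorem WordLT.append_left {S : Set ι} {M N : List (ι × Bool)} (h : WordLT S M N)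
    (P : List (ι × Bool)) : WordLT S (P ++ M) (P ++ N) := by
  classical
  rw [WordLT, InvImage, Prod.lex_def] at h ⊢
  simp only [List.countP_append] at h ⊢
  exact h.imp (by lia) fun h ↦ ⟨by lia, h.2.append_left P⟩

theorem forall_mem_of_not_wordLT {S : Set ι} {L M : List (ι × Bool)} (h : ¬WordLT S L M)
    (hL : ∀ p ∈ L, p.1 ∈ S) : ∀ p ∈ M, p.1 ∈ S := by
  classical
  have countP_left : L.countP (·.1 ∉ S) = 0 := by simpa [List.countP_eq_zero] using hL
  rw [WordLT, InvImage, Prod.lex_def] at h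
  have countP_right : M.countP (·.1 ∉ S) = 0 := by
    simp only [countP_left] at h
    lia
  simpa [List.countP_eq_zero] using countP_right

theorem exists_schreierTransversal_isAdapted {V : Type v} [MulAction (FreeGroup ι) V]
    [MulAction.IsPretransitive (FreeGroup ι) V] (v₀ : V) (S : Set ι) :
    ∃ T : SchreierTransversal (ι := ι) v₀, T.IsAdapted S := by
  have exists_word (v : V) : {L : List (ι × Bool) | FreeGroup.mk L • v₀ = v}.Nonempty := by
    obtain ⟨g, rfl⟩ := MulAction.exists_smul_eq (FreeGroup ι) v₀ v
    obtain ⟨L, rfl⟩ := Quot.exists_rep g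
    exact ⟨L, rfl⟩
  let word (v : V) := (wordLT_wf S).min _ (exists_word v)
  have mk_word_smul (v : V) : FreeGroup.mk (word v) • v₀ = v :=
    (wordLT_wf S).min_mem _ (exists_word v)
  have not_lt_word (L : List (ι × Bool)) : ¬WordLT S L (word (FreeGroup.mk L • v₀)) :=
    (wordLT_wf S).not_lt_min {L' | FreeGroup.mk L' • v₀ = FreeGroup.mk L • v₀} rfl
  have word_mk_smul_of_suffix {v : V} {M : List (ι × Bool)} (hM : M <:+ word v) :
      word (FreeGroup.mk M • v₀) = M := by
    -- A smaller word with the endpoint of the suffix `M` would make the whole word smaller.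
    refine (wordLT_trichotomous S).trichotomous _ _ (fun word_lt ↦ ?_) (not_lt_word M)
    obtain ⟨P, hP⟩ := hM
    apply not_lt_word (P ++ word (FreeGroup.mk M • v₀))
    rw [← FreeGroup.mul_mk, mul_smul, mk_word_smul, ← mul_smul, FreeGroup.mul_mk, hP, mk_word_smul,
      ← hP]
    exact word_lt.append_left P
  refine ⟨⟨word, mk_word_smul, word_mk_smul_of_suffix⟩, fun a ha ↦ ?_⟩
  obtain ⟨L, rfl, hL⟩ := exists_mk_eq_of_mem_closure_image ha
  exact mk_mem_closure_of_image (forall_mem_of_not_wordLT (not_lt_word L) hL)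

end MinimalTransversal

/-- The family `y` is a free basis of the subgroup `K`. -/
structure IsFreeBasis {α : Type u} {G : Type v} [Group G] (y : α → G) (K : Subgroup G) : Prop where
  lift_injective : Function.Injective (FreeGroup.lift y)
  closure_range : Subgroup.closure (Set.range y) = K

namespace IsFreeBasis

variable {α : Type u} {G : Type v} {G' : Type w} [Group G] [Group G'] {y : α → G} {K : Subgroup G}

theorem injective (hy : IsFreeBasis y K) : Function.Injective y := by
  intro a b hab
  apply FreeGroup.of_injective
  apply hy.lift_injective
  rwa [FreeGroup.lift_apply_of, FreeGroup.lift_apply_of]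

theorem lift_surjective (hy : IsFreeBasis y ⊤) : Function.Surjective (FreeGroup.lift y) :=
  FreeGroup.lift_surjective_iff_closure_range_eq_top.2 hy.closure_range

theorem map (hy : IsFreeBasis y K) {f : G →* G'} (hf : Function.Injective f) :
    IsFreeBasis (f ∘ y) (K.map f) where
  lift_injective := by
    have lift_comp : FreeGroup.lift (f ∘ y) = f.comp (FreeGroup.lift y) := by
      ext a
      simp
    exact lift_comp ▸ hf.comp hy.lift_injective
  closure_range := by
    rw [← hy.closure_range, MonoidHom.map_closure, Set.range_comp]

theorem restrict (hy : IsFreeBasis y K) (B : Set α) :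
    IsFreeBasis (fun b : B ↦ y b) (Subgroup.closure (y '' B)) where
  lift_injective := by
    have lift_restrict : FreeGroup.lift (fun b : B ↦ y b) =
        (FreeGroup.lift y).comp (FreeGroup.map (↑)) := by
      ext b
      simp
    exact lift_restrict ▸ hy.lift_injective.comp (FreeGroup.map_injective Subtype.val_injective)
  closure_range := by rw [Set.image_eq_range]

/-- The exponent sum of `y a` vanishes on the other members of the basis. -/
theorem notMem_closure_image (hy : IsFreeBasis y K) {a : α} {S : Set α} (ha : a ∉ S) :
    y a ∉ Subgroup.closure (y '' S) := by
  classical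
  intro mem_closure
  let exponent : FreeGroup α →* Multiplicative ℤ :=
    FreeGroup.lift (Pi.mulSingle a (Multiplicative.ofAdd 1))
  have of_mem : FreeGroup.of a ∈ Subgroup.closure (FreeGroup.of '' S) := by
    rw [← Subgroup.mem_map_iff_mem hy.lift_injective, MonoidHom.map_closure, Set.image_image]
    simpa using mem_closure
  have closure_le_ker : Subgroup.closure (FreeGroup.of '' S) ≤ exponent.ker := by
    rw [Subgroup.closure_le]
    rintro _ ⟨b, hb, rfl⟩
    have hba : b ≠ a := fun h ↦ ha (h ▸ hb)
    simp [exponent, hba]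
  have exponent_eq_one := MonoidHom.mem_ker.1 (closure_le_ker of_mem)
  simp [exponent] at exponent_eq_one

/-- The free basis `y` of `K`, as a `FreeGroupBasis` of the group `K`. -/
noncomputable def toFreeGroupBasis (hy : IsFreeBasis y K) : FreeGroupBasis α K :=
  FreeGroupBasis.ofRepr <| ((MonoidHom.ofInjective hy.lift_injective).trans <|
    MulEquiv.subgroupCongr <| FreeGroup.range_lift_eq_closure.trans hy.closure_range).symm

theorem coe_toFreeGroupBasis (hy : IsFreeBasis y K) (a : α) :
    (hy.toFreeGroupBasis a : G) = y a :=
  FreeGroup.lift_apply_of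

/-- The part of a free basis of `K` that generates `K ⊓ closure (x '' S)` witnesses that the latter
is a free factor of `K`. -/
theorem exists_isFreeBasis_inf_closure {x : α → G} (hx : IsFreeBasis x ⊤) (K : Subgroup G)
    (S : Set α) :
    ∃ (E : Type u) (e : E → G) (B : Set E),
      IsFreeBasis e K ∧ Subgroup.closure (e '' B) = K ⊓ Subgroup.closure (x '' S) := by
  let f := FreeGroup.lift x
  have stabilizer_eq : MulAction.stabilizer (FreeGroup α) ((1 : FreeGroup α) : _ ⧸ K.comap f) =
      K.comap f := MulAction.stabilizer_quotient _
  have map_comap : (K.comap f).map f = K :=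
    Subgroup.map_comap_eq_self_of_surjective hx.lift_surjective K
  obtain ⟨T, hT⟩ := exists_schreierTransversal_isAdapted ((1 : FreeGroup α) : _ ⧸ K.comap f) S
  have chordLoop_basis : IsFreeBasis T.chordLoop (K.comap f) :=
    ⟨T.lift_chordLoop_injective, T.closure_range_chordLoop.trans stabilizer_eq⟩
  have image_basis := chordLoop_basis.map hx.lift_injective
  rw [map_comap] at image_basis
  refine ⟨T.Chord, f ∘ T.chordLoop, T.chordsOver S, image_basis, ?_⟩
  rw [Set.image_comp, ← MonoidHom.map_closure, hT.closure_chordLoop, stabilizer_eq,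
    Subgroup.map_inf _ _ _ hx.lift_injective, map_comap, MonoidHom.map_closure, Set.image_image]
  simp only [FreeGroup.lift_apply_of]

end IsFreeBasis

theorem IsOrderedBasis.isFreeBasis {n : ℕ} {F : Type u} [Group F] {x : Fin n → F}
    (hx : IsOrderedBasis x) : IsFreeBasis x ⊤ :=
  ⟨hx.1, FreeGroup.lift_surjective_iff_closure_range_eq_top.1 hx.2⟩

section Rank

open Cardinal

variable {α : Type u} {G : Type v} [Group G] {K : Subgroup G}

theorem rk_le_mk {S : Set G} (hS : Subgroup.closure S = K) : rk K ≤ #S :=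
  ciInf_le' (fun S : {S : Set G // Subgroup.closure S = K} ↦ #S.1) ⟨S, hS⟩

/-- The exponent sums of the letters in the elements of `S` span `α →₀ ℤ`. -/
theorem mk_le_mk_of_closure_eq_top {S : Set (FreeGroup α)} (hS : Subgroup.closure S = ⊤) :
    #α ≤ #S := by
  let exponents : FreeGroup α →* Multiplicative (α →₀ ℤ) :=
    FreeGroup.lift fun a ↦ Multiplicative.ofAdd (Finsupp.single a 1)
  let J : Set (α →₀ ℤ) := (fun g ↦ (exponents g).toAdd) '' S
  have exponents_mem (g : FreeGroup α) : (exponents g).toAdd ∈ Submodule.span ℤ J := by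
    have hg : g ∈ Subgroup.closure S := hS ▸ Subgroup.mem_top g
    induction hg using Subgroup.closure_induction with
    | mem g hg => exact Submodule.subset_span ⟨g, hg, rfl⟩
    | one => simp
    | mul g h _ _ ihg ihh => simpa using add_mem ihg ihh
    | inv g _ ih => simpa using ih
  have span_eq_top : Submodule.span ℤ J = ⊤ := by
    rw [eq_top_iff, ← (Finsupp.basisSingleOne (R := ℤ) (ι := α)).span_eq, Submodule.span_le]
    rintro _ ⟨a, rfl⟩
    simpa [exponents] using exponents_mem (FreeGroup.of a)
  calc #α = #(Set.range (Finsupp.basisSingleOne (R := ℤ) (ι := α))) :=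
        (mk_range_eq _ (Module.Basis.injective _)).symm
    _ ≤ #J := Module.Basis.le_span _ span_eq_top
    _ ≤ #S := mk_image_le

namespace IsFreeBasis

theorem mk_range_le {y : α → G} (hy : IsFreeBasis y K) {S : Set G}
    (hS : Subgroup.closure S = K) : #(Set.range y) ≤ #S := by
  let f := FreeGroup.lift y
  have image_preimage : f '' (f ⁻¹' S) = S := by
    apply Set.image_preimage_eq_of_subset
    rw [← MonoidHom.coe_range, FreeGroup.range_lift_eq_closure, hy.closure_range, ← hS]
    exact Subgroup.subset_closure
  have closure_preimage : Subgroup.closure (f ⁻¹' S) = ⊤ := by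
    apply Subgroup.map_injective hy.lift_injective
    rw [MonoidHom.map_closure, image_preimage, hS, ← MonoidHom.range_eq_map,
      FreeGroup.range_lift_eq_closure, hy.closure_range]
  rw [← lift_le.{u}]
  calc lift.{u} #(Set.range y) = lift.{v} #α := mk_range_eq_of_injective hy.injective
    _ ≤ lift.{v} #(f ⁻¹' S) := lift_le.2 (mk_le_mk_of_closure_eq_top closure_preimage)
    _ = lift.{u} #(f '' (f ⁻¹' S)) := (mk_image_eq_lift _ _ hy.lift_injective).symm
    _ = lift.{u} #S := by rw [image_preimage]

theorem rk_eq {y : α → G} (hy : IsFreeBasis y K) : rk K = #(Set.range y) := by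
  have : Nonempty {S : Set G // Subgroup.closure S = K} := ⟨⟨_, hy.closure_range⟩⟩
  exact (rk_le_mk hy.closure_range).antisymm (le_ciInf fun S ↦ hy.mk_range_le S.2)

variable {x : α → G}

theorem exists_sup_closure_eq_and_rk_eq (hx : IsFreeBasis x ⊤) (K : Subgroup G) (S : Set α) :
    ∃ T : Set G, K ⊓ Subgroup.closure (x '' S) ⊔ Subgroup.closure T = K ∧
      rk K = rk (K ⊓ Subgroup.closure (x '' S)) + #T := by
  obtain ⟨E, e, B, he, closure_image⟩ := hx.exists_isFreeBasis_inf_closure K S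
  have range_eq : Set.range e = e '' B ∪ e '' Bᶜ := by
    rw [← Set.image_union, Set.union_compl_self, Set.image_univ]
  have disjoint : Disjoint (e '' B) (e '' Bᶜ) :=
    Set.disjoint_image_of_injective he.injective disjoint_compl_right
  refine ⟨e '' Bᶜ, ?_, ?_⟩
  · rw [← closure_image, ← Subgroup.closure_union, ← range_eq, he.closure_range]
  · rw [← closure_image, he.rk_eq, (he.restrict B).rk_eq, ← Set.image_eq_range, range_eq,
      mk_union_of_disjoint disjoint]

theorem rk_inf_closure_le (hx : IsFreeBasis x ⊤) (K : Subgroup G) (S : Set α) :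
    rk (K ⊓ Subgroup.closure (x '' S)) ≤ rk K := by
  obtain ⟨T, -, rk_eq⟩ := hx.exists_sup_closure_eq_and_rk_eq K S
  exact rk_eq ▸ le_self_add

theorem rk_inf_closure_add_one_le (hx : IsFreeBasis x ⊤) {S : Set α}
    (hK : ¬K ≤ Subgroup.closure (x '' S)) : rk (K ⊓ Subgroup.closure (x '' S)) + 1 ≤ rk K := by
  obtain ⟨T, sup_eq, rk_eq⟩ := hx.exists_sup_closure_eq_and_rk_eq K S
  have T_nonempty : T.Nonempty := by
    rw [Set.nonempty_iff_ne_empty]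
    rintro rfl
    rw [Subgroup.closure_empty, sup_bot_eq] at sup_eq
    exact hK (inf_eq_left.1 sup_eq)
  have : Nonempty T := T_nonempty.to_subtype
  rw [rk_eq]
  gcongr
  exact Cardinal.one_le_iff_ne_zero.2 (mk_ne_zero T)

theorem exists_sup_closure_singleton_eq (hx : IsFreeBasis x ⊤) {S : Set α}
    (hfin : rk (K ⊓ Subgroup.closure (x '' S)) < ℵ₀)
    (hrk : rk K ≤ rk (K ⊓ Subgroup.closure (x '' S)) + 1) :
    ∃ g, K ⊓ Subgroup.closure (x '' S) ⊔ Subgroup.closure {g} = K := by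
  obtain ⟨T, sup_eq, rk_eq⟩ := hx.exists_sup_closure_eq_and_rk_eq K S
  rw [rk_eq, add_comm, add_comm _ (1 : Cardinal), add_le_add_iff_of_lt_aleph0 hfin,
    mk_le_one_iff_set_subsingleton] at hrk
  obtain rfl | ⟨g, rfl⟩ := hrk.eq_empty_or_singleton
  · exact ⟨1, by simpa using sup_eq⟩
  · exact ⟨g, sup_eq⟩

end IsFreeBasis

end Rank

section Hopf

variable {α : Type u} {G : Type v} [Group G]

theorem exists_perm_eq_mul_of_mem (B : Set G) [Finite B] (g : G) :
    ∃ σ : Equiv.Perm B, ∀ (b : B) (hb : g * b ∈ B), σ b = ⟨g * b, hb⟩ := by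
  classical
  let := Fintype.ofFinite B
  let mulLeft : {b : B // g * b ∈ B} ≃ {b : B // g⁻¹ * b ∈ B} :=
    { toFun := fun b ↦ ⟨⟨g * b.1, b.2⟩, by simp⟩
      invFun := fun b ↦ ⟨⟨g⁻¹ * b.1, b.2⟩, by simp⟩
      left_inv := fun b ↦ by simp
      right_inv := fun b ↦ by simp }
  exact ⟨mulLeft.extendSubtype, mulLeft.extendSubtype_apply_of_mem⟩

/-- The elements spelled by the suffixes of the word `L`. -/
def suffixSet (L : List (α × Bool)) : Set (FreeGroup α) :=
  FreeGroup.mk '' {M | M <:+ L}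

theorem finite_suffixSet (L : List (α × Bool)) : (suffixSet L).Finite := by
  simpa only [suffixSet, List.mem_tails] using (List.finite_toSet L.tails).image FreeGroup.mk

theorem lift_mk_apply_one_of_suffix {L : List (α × Bool)} {σ : α → Equiv.Perm (suffixSet L)}
    (hσ : ∀ a b (hb : FreeGroup.of a * b.1 ∈ suffixSet L), σ a b = ⟨FreeGroup.of a * b, hb⟩)
    {M : List (α × Bool)} (hM : M <:+ L) :
    FreeGroup.lift σ (FreeGroup.mk M) ⟨1, [], List.nil_suffix, rfl⟩ =
      ⟨FreeGroup.mk M, M, hM, rfl⟩ := by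
  induction M with
  | nil => rfl
  | cons p M ih =>
    have hM' : M <:+ L := (List.suffix_cons p M).trans hM
    obtain ⟨a, _ | _⟩ := p
    · have of_mul_mk : FreeGroup.of a * FreeGroup.mk ((a, false) :: M) = FreeGroup.mk M := by
        rw [mk_cons_false, mul_inv_cancel_left]
      have lift_mk : FreeGroup.lift σ (FreeGroup.mk ((a, false) :: M)) =
          (σ a)⁻¹ * FreeGroup.lift σ (FreeGroup.mk M) := by
        rw [mk_cons_false, map_mul, map_inv, FreeGroup.lift_apply_of]
      rw [lift_mk, Equiv.Perm.mul_apply, ih hM', Equiv.Perm.inv_eq_iff_eq,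
        hσ a _ (of_mul_mk ▸ ⟨M, hM', rfl⟩)]
      exact Subtype.ext of_mul_mk.symm
    · have of_mul_mk := (mk_cons_true a M).symm
      have lift_mk : FreeGroup.lift σ (FreeGroup.mk ((a, true) :: M)) =
          σ a * FreeGroup.lift σ (FreeGroup.mk M) := by
        rw [mk_cons_true, map_mul, FreeGroup.lift_apply_of]
      rw [lift_mk, Equiv.Perm.mul_apply, ih hM', hσ a _ (of_mul_mk ▸ ⟨_, hM, rfl⟩)]
      exact Subtype.ext of_mul_mk

theorem residuallyFinite_freeGroup : Group.ResiduallyFinite (FreeGroup α) := by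
  apply Group.residuallyFinite_of_forall_exists_finite_monoidHom
  intro g hg
  obtain ⟨L, rfl⟩ := Quot.exists_rep g
  have : Finite (suffixSet L) := finite_suffixSet L
  choose σ hσ using fun a ↦ exists_perm_eq_mul_of_mem (suffixSet L) (FreeGroup.of a)
  refine ⟨Equiv.Perm (suffixSet L), inferInstance, inferInstance, FreeGroup.lift σ, fun h ↦ hg ?_⟩
  have lift_apply := lift_mk_apply_one_of_suffix hσ List.suffix_rfl
  change FreeGroup.lift σ (FreeGroup.mk L) = 1 at h
  rw [h] at lift_apply
  exact (congrArg Subtype.val lift_apply).symm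

theorem finite_monoidHom_of_fg [Group.FG G] (Q : Type w) [Group Q] [Finite Q] :
    Finite (G →* Q) := by
  obtain ⟨S, closure_eq_top, S_finite⟩ := Group.fg_iff.1 ‹Group.FG G›
  have : Finite S := S_finite
  refine Finite.of_injective (fun (f : G →* Q) (s : S) ↦ f s) fun f f' h ↦ ?_
  exact MonoidHom.eq_of_eqOn_dense closure_eq_top fun s hs ↦ congrFun h ⟨s, hs⟩

/-- Mal'cev: precomposition with `f` permutes the finitely many homomorphisms to a finite quotient
of `G`, so that every such homomorphism factors through `f`. -/
theorem injective_of_surjective_of_residuallyFinite [Group.FG G] [Group.ResiduallyFinite G]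
    {f : G →* G} (hf : Function.Surjective f) : Function.Injective f := by
  rw [injective_iff_map_eq_one]
  intro g hg
  by_contra g_ne_one
  obtain ⟨N, hgN⟩ := Group.exists_finiteIndexNormalSubgroup_notMem g g_ne_one
  have : Finite (G →* G ⧸ N.toSubgroup) := finite_monoidHom_of_fg _
  have precomp_surjective : Function.Surjective fun ψ : G →* G ⧸ N.toSubgroup ↦ ψ.comp f :=
    Finite.surjective_of_injective fun _ _ ↦ (MonoidHom.cancel_right hf).1
  obtain ⟨ψ, hψ⟩ := precomp_surjective (QuotientGroup.mk' N.toSubgroup)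
  apply hgN
  have mk_eq_one : QuotientGroup.mk' N.toSubgroup g = 1 := by
    rw [← hψ, MonoidHom.comp_apply, hg, map_one]
  exact (QuotientGroup.eq_one_iff g).1 mk_eq_one

theorem IsFreeBasis.of_card_le_rk {E : Type w} {e : E → G} {K : Subgroup G} (he : IsFreeBasis e K)
    [Finite α] {y : α → G} (hy : Subgroup.closure (Set.range y) = K)
    (hcard : (Nat.card α : Cardinal) ≤ rk K) : IsFreeBasis y K where
  closure_range := hy
  lift_injective := by
    have card_range_le : Cardinal.mk (Set.range y) ≤ Nat.card α := by
      rw [← Nat.cast_card]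
      exact_mod_cast Finite.card_range_le y
    have mk_range_eq : Cardinal.mk (Set.range e) = Nat.card α :=
      he.rk_eq ▸ ((rk_le_mk hy).trans card_range_le).antisymm hcard
    obtain ⟨rangeEquivFin⟩ := Cardinal.mk_eq_nat_iff.1 mk_range_eq
    let indexEquiv : E ≃ α :=
      (Equiv.ofInjective e he.injective).trans (rangeEquivFin.trans (Finite.equivFin α).symm)
    let basisEquiv : K ≃* FreeGroup α :=
      he.toFreeGroupBasis.repr.trans (FreeGroup.freeGroupCongr indexEquiv)
    let rangeEquiv : (FreeGroup.lift y).range ≃* FreeGroup α :=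
      (MulEquiv.subgroupCongr (FreeGroup.range_lift_eq_closure.trans hy)).trans basisEquiv
    let f : FreeGroup α →* FreeGroup α :=
      rangeEquiv.toMonoidHom.comp (FreeGroup.lift y).rangeRestrict
    have f_surjective : Function.Surjective f :=
      rangeEquiv.surjective.comp (FreeGroup.lift y).rangeRestrict_surjective
    have := residuallyFinite_freeGroup (α := α)
    have f_injective : Function.Injective f :=
      injective_of_surjective_of_residuallyFinite f_surjective
    exact Subtype.val_injective.comp (f_injective.of_comp (f := rangeEquiv))

end Hopf

section OneGenImage

variable {F : Type u} [Group F]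

/-- `L` is the image of `K` under a 1-generator subgroup endomorphism of `K`. -/
def IsOneGenImage (K L : Subgroup F) : Prop :=
  ∃ φ : K →* K, IsOneGenEndo φ ∧ Subgroup.map K.subtype φ.range = L

theorem IsFreeBasis.isOneGenImage_update {α : Type} [DecidableEq α] {y : α → F} {K : Subgroup F}
    (hy : IsFreeBasis y K) (k : α) {g : F} (hg : g ∈ K) :
    IsOneGenImage K (Subgroup.closure (Set.range (Function.update y k g))) := by
  let b := hy.toFreeGroupBasis
  let newBasis : α → K := Function.update b k ⟨g, hg⟩
  let φ : K →* K := (FreeGroup.lift newBasis).comp b.repr.toMonoidHom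
  have φ_basis (a : α) : φ (b a) = newBasis a := by
    simp [φ]
  have coe_newBasis : K.subtype ∘ newBasis = Function.update y k g := by
    funext a
    obtain rfl | hak := eq_or_ne a k
    · simp [newBasis]
    · simpa [newBasis, hak] using hy.coe_toFreeGroupBasis a
  refine ⟨φ, ⟨α, b, {k}, Set.subsingleton_singleton, fun a hak ↦ ?_⟩, ?_⟩
  · rw [φ_basis]
    exact Function.update_of_ne hak _ _
  · have range_φ : φ.range = (FreeGroup.lift newBasis).range := by
      rw [MonoidHom.range_comp, MonoidHom.range_eq_top.2 b.repr.surjective,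
        ← MonoidHom.range_eq_map]
    rw [range_φ, FreeGroup.range_lift_eq_closure, MonoidHom.map_closure, ← Set.range_comp,
      coe_newBasis]

end OneGenImage

section Stage

/-- The first `k` members of `x` followed by the remaining members of `h`. -/
def splice {n : ℕ} {β : Type u} (x h : Fin n → β) (k : ℕ) : Fin n → β :=
  fun j ↦ if j < k then x j else h j

theorem splice_succ {n : ℕ} {β : Type u} (x h : Fin n → β) (k : Fin n) :
    splice x h k = Function.update (splice x h (k + 1)) k (h k) := by
  funext j
  obtain rfl | hjk := eq_or_ne j k
  · simp [splice]
  · have lt_succ_iff : (j : ℕ) < k + 1 ↔ (j : ℕ) < k := by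
      have := Fin.val_ne_of_ne hjk
      lia
    simp [splice, hjk, lt_succ_iff]

variable {F : Type u} [Group F] {n : ℕ}

theorem stage_zero (x : Fin n → F) : stage x 0 = ⊥ := by
  simp [stage]

theorem stage_eq_closure_range (x : Fin n → F) : stage x n = Subgroup.closure (Set.range x) := by
  simp [stage]

theorem stage_mono (x : Fin n → F) : Monotone (stage x) := fun _ _ hij ↦
  Subgroup.closure_mono (Set.image_mono fun _ hj ↦ lt_of_lt_of_le hj hij)

theorem mem_stage (x : Fin n → F) {j : Fin n} {i : ℕ} (hji : j < i) : x j ∈ stage x i :=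
  Subgroup.subset_closure ⟨j, hji, rfl⟩

theorem stage_succ (x : Fin n → F) (j : Fin n) :
    stage x (j + 1) = stage x j ⊔ Subgroup.closure {x j} := by
  have setOf_lt_succ : {i : Fin n | (i : ℕ) < j + 1} = {i : Fin n | (i : ℕ) < j} ∪ {j} := by
    ext i
    simp only [Set.mem_ofPred_eq, Set.mem_union, Set.mem_singleton_iff, Fin.ext_iff]
    lia
  rw [stage, setOf_lt_succ, Set.image_union, Set.image_singleton, Subgroup.closure_union, stage]

/-- The family `y` is triangular with respect to `x`: its `j`-th member involves only the first
`j + 1` members of `x` and, unless it is trivial, not only the first `j`. -/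
def IsTriangular (x y : Fin n → F) : Prop :=
  ∀ j : Fin n, y j ∈ stage x (j + 1) ∧ (y j ∈ stage x j → y j = 1)

theorem IsTriangular.closure_range_splice {x h : Fin n → F} (hh : IsTriangular x h) (k : ℕ) :
    Subgroup.closure (Set.range (splice x h k)) =
      stage x k ⊔ Subgroup.closure (Set.range h) := by
  apply le_antisymm
  · rw [Subgroup.closure_le]
    rintro _ ⟨j, rfl⟩
    by_cases hjk : j < k
    · rw [splice, if_pos hjk]
      exact Subgroup.mem_sup_left (mem_stage x hjk)
    · rw [splice, if_neg hjk]
      exact Subgroup.mem_sup_right (Subgroup.subset_closure ⟨j, rfl⟩)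
  · have stage_le : stage x k ≤ Subgroup.closure (Set.range (splice x h k)) := by
      apply Subgroup.closure_mono
      rintro _ ⟨j, hjk, rfl⟩
      exact ⟨j, if_pos hjk⟩
    refine sup_le stage_le ?_
    rw [Subgroup.closure_le]
    rintro _ ⟨j, rfl⟩
    by_cases hjk : j < k
    · exact stage_le (stage_mono x hjk (hh j).1)
    · exact Subgroup.subset_closure ⟨j, if_neg hjk⟩

theorem isTriangular_splice {x y h : Fin n → F} (hy : IsTriangular x y) (hh : IsTriangular x h)
    (k : ℕ) : IsTriangular x (splice y h k) := by
  intro j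
  by_cases hjk : j < k
  · simpa only [splice, if_pos hjk] using hy j
  · simpa only [splice, if_neg hjk] using hh j

end Stage

section Triangular

open Cardinal

variable {F : Type u} [Group F] {n : ℕ} {x y h : Fin n → F}

namespace IsFreeBasis

theorem isTriangular_self (hx : IsFreeBasis x ⊤) : IsTriangular x x := fun j ↦
  ⟨mem_stage x j.val.lt_succ_self, fun hj ↦ absurd hj (hx.notMem_closure_image (lt_irrefl (j : ℕ)))⟩

theorem rk_inf_stage_mono (hx : IsFreeBasis x ⊤) (K : Subgroup F) :
    Monotone fun i ↦ rk (K ⊓ stage x i) := fun i j hij ↦ by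
  have inf_inf : K ⊓ stage x j ⊓ stage x i = K ⊓ stage x i := by
    rw [inf_assoc, inf_eq_right.2 (stage_mono x hij)]
  change rk (K ⊓ stage x i) ≤ rk (K ⊓ stage x j)
  rw [← inf_inf]
  exact hx.rk_inf_closure_le _ _

end IsFreeBasis

theorem closure_range_subtype {α : Type v} {y : α → F} {p : α → Prop}
    (hp : ∀ a, ¬p a → y a = 1) :
    Subgroup.closure (Set.range fun a : {a // p a} ↦ y a) = Subgroup.closure (Set.range y) := by
  refine (Subgroup.closure_mono (Set.range_comp_subset_range _ y)).antisymm ?_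
  rw [Subgroup.closure_le]
  rintro _ ⟨a, rfl⟩
  by_cases ha : p a
  · exact Subgroup.subset_closure ⟨⟨a, ha⟩, rfl⟩
  · rw [hp a ha]
    exact one_mem _

namespace IsTriangular

theorem ncard_le_rk_inf_stage (hx : IsFreeBasis x ⊤) (hy : IsTriangular x y) {K : Subgroup F}
    (hK : ∀ j, y j ∈ K) (i : ℕ) :
    ({j : Fin n | j < i ∧ y j ≠ 1}.ncard : Cardinal) ≤ rk (K ⊓ stage x i) := by
  induction i with
  | zero => simp
  | succ i ih =>
    by_cases hi : ∃ j : Fin n, j = i ∧ y j ≠ 1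
    · obtain ⟨j, rfl, hyj⟩ := hi
      have subset_insert : {l : Fin n | (l : ℕ) < j + 1 ∧ y l ≠ 1} ⊆
          insert j {l : Fin n | (l : ℕ) < j ∧ y l ≠ 1} := by
        rintro l ⟨hl, hyl⟩
        exact (Nat.lt_succ_iff_lt_or_eq.1 hl).symm.imp Fin.ext fun hlj ↦ ⟨hlj, hyl⟩
      have inf_inf : K ⊓ stage x (j + 1) ⊓ stage x j = K ⊓ stage x j := by
        rw [inf_assoc, inf_eq_right.2 (stage_mono x j.val.le_succ)]
      have not_le : ¬K ⊓ stage x (j + 1) ≤ stage x j := fun hle ↦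
        hyj ((hy j).2 (hle ⟨hK j, (hy j).1⟩))
      calc ({l : Fin n | (l : ℕ) < j + 1 ∧ y l ≠ 1}.ncard : Cardinal)
          ≤ ({l : Fin n | (l : ℕ) < j ∧ y l ≠ 1}.ncard : Cardinal) + 1 := by
            exact_mod_cast (Set.ncard_le_ncard subset_insert).trans (Set.ncard_insert_le _ _)
        _ ≤ rk (K ⊓ stage x j) + 1 := by gcongr
        _ ≤ rk (K ⊓ stage x (j + 1)) := by
            rw [← inf_inf]
            exact hx.rk_inf_closure_add_one_le not_le
    · have subset : {l : Fin n | l < i + 1 ∧ y l ≠ 1} ⊆ {l : Fin n | l < i ∧ y l ≠ 1} := by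
        rintro l ⟨hl, hyl⟩
        exact ⟨(Nat.lt_succ_iff_lt_or_eq.1 hl).resolve_right fun hli ↦ hi ⟨l, hli, hyl⟩, hyl⟩
      calc ({l : Fin n | l < i + 1 ∧ y l ≠ 1}.ncard : Cardinal)
          ≤ ({l : Fin n | l < i ∧ y l ≠ 1}.ncard : Cardinal) := by
            exact_mod_cast Set.ncard_le_ncard subset
        _ ≤ rk (K ⊓ stage x i) := ih
        _ ≤ rk (K ⊓ stage x (i + 1)) := hx.rk_inf_stage_mono K i.le_succ

theorem isFreeBasis (hx : IsFreeBasis x ⊤) (hy : IsTriangular x y) :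
    IsFreeBasis (fun j : {j // y j ≠ 1} ↦ y j) (Subgroup.closure (Set.range y)) := by
  obtain ⟨_, _, _, he, -⟩ :=
    hx.exists_isFreeBasis_inf_closure (Subgroup.closure (Set.range y)) Set.univ
  refine he.of_card_le_rk (closure_range_subtype fun _ ↦ not_not.1) ?_
  have ncard_le := hy.ncard_le_rk_inf_stage hx
    (fun j ↦ Subgroup.subset_closure (Set.mem_range_self j)) n
  simpa [stage_eq_closure_range, hx.closure_range, ← Nat.card_coe_set_eq, Set.coe_ofPred] using
    ncard_le

theorem isOneGenImage_update (hx : IsFreeBasis x ⊤) (hy : IsTriangular x y) {k : Fin n}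
    (hk : y k ≠ 1) {g : F} (hg : g ∈ Subgroup.closure (Set.range y)) :
    IsOneGenImage (Subgroup.closure (Set.range y))
      (Subgroup.closure (Set.range (Function.update y k g))) := by
  classical
  have update_subtype : (fun j : {j // y j ≠ 1} ↦ Function.update y k g j) =
      Function.update (fun j : {j // y j ≠ 1} ↦ y j) ⟨k, hk⟩ g :=
    Function.update_comp_eq_of_injective y Subtype.val_injective ⟨k, hk⟩ g
  have update_eq_one (j : Fin n) (hj : ¬y j ≠ 1) : Function.update y k g j = 1 := by
    rw [Function.update_of_ne (by rintro rfl; exact hj hk), not_not.1 hj]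
  rw [← closure_range_subtype update_eq_one, update_subtype]
  exact (hy.isFreeBasis hx).isOneGenImage_update ⟨k, hk⟩ hg

theorem isOneGenImage_stage_sup (hx : IsFreeBasis x ⊤) (hh : IsTriangular x h) (k : Fin n) :
    IsOneGenImage (stage x (k + 1) ⊔ Subgroup.closure (Set.range h))
      (stage x k ⊔ Subgroup.closure (Set.range h)) := by
  have splice_apply : splice x h (k + 1) k = x k := if_pos k.val.lt_succ_self
  have x_ne_one : x k ≠ 1 := fun x_eq_one ↦
    hx.notMem_closure_image (Set.notMem_empty k) (x_eq_one ▸ one_mem _)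
  rw [← hh.closure_range_splice, ← hh.closure_range_splice, splice_succ]
  refine (isTriangular_splice hx.isTriangular_self hh _).isOneGenImage_update hx
    (splice_apply ▸ x_ne_one) ?_
  rw [hh.closure_range_splice]
  exact Subgroup.mem_sup_right (Subgroup.subset_closure ⟨k, rfl⟩)

end IsTriangular

namespace InEchelonForm

variable {H : Subgroup F}

theorem rk_inf_stage_lt_aleph0 (hH : InEchelonForm x H) {i : ℕ} (hi : i ≤ n) :
    rk (H ⊓ stage x i) < ℵ₀ := by
  induction i with
  | zero =>
    rw [stage_zero, inf_bot_eq]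
    exact (rk_le_mk Subgroup.closure_empty).trans_lt (by simp [aleph0_pos])
  | succ i ih => exact (hH i hi).trans_lt (add_lt_aleph0 (ih (by lia)) one_lt_aleph0)

theorem exists_stage_succ_eq (hx : IsFreeBasis x ⊤) (hH : InEchelonForm x H) (j : Fin n) :
    ∃ g, H ⊓ stage x (j + 1) = H ⊓ stage x j ⊔ Subgroup.closure {g} ∧
      (g ∈ stage x j → g = 1) := by
  have inf_inf : H ⊓ stage x (j + 1) ⊓ stage x j = H ⊓ stage x j := by
    rw [inf_assoc, inf_eq_right.2 (stage_mono x j.val.le_succ)]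
  obtain ⟨g, hg⟩ := hx.exists_sup_closure_singleton_eq (K := H ⊓ stage x (j + 1))
    (S := {l | (l : ℕ) < j}) (inf_inf.symm ▸ hH.rk_inf_stage_lt_aleph0 j.2.le)
    (inf_inf.symm ▸ hH j j.2)
  change H ⊓ stage x (j + 1) ⊓ stage x j ⊔ Subgroup.closure {g} = _ at hg
  rw [inf_inf] at hg
  by_cases hgj : g ∈ stage x j
  · have g_mem : g ∈ H ⊓ stage x (j + 1) :=
      hg ▸ Subgroup.mem_sup_right (Subgroup.mem_closure_singleton_self g)
    refine ⟨1, ?_, fun _ ↦ rfl⟩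
    rw [← hg, Subgroup.closure_singleton_one, sup_bot_eq, sup_eq_left, Subgroup.closure_le,
      Set.singleton_subset_iff]
    exact ⟨g_mem.1, hgj⟩
  · exact ⟨g, hg.symm, fun h ↦ absurd h hgj⟩

theorem exists_isTriangular (hx : IsFreeBasis x ⊤) (hH : InEchelonForm x H) :
    ∃ h, IsTriangular x h ∧ Subgroup.closure (Set.range h) = H := by
  choose h inf_stage_succ eq_one using hH.exists_stage_succ_eq hx
  have stage_eq (i : ℕ) (hi : i ≤ n) : stage h i = H ⊓ stage x i := by
    induction i with
    | zero => rw [stage_zero, stage_zero, inf_bot_eq]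
    | succ i ih => rw [stage_succ h ⟨i, hi⟩, ih (by lia), inf_stage_succ ⟨i, hi⟩]
  refine ⟨h, fun j ↦ ⟨?_, eq_one j⟩, ?_⟩
  · have h_mem := mem_stage h j.val.lt_succ_self
    rw [stage_eq _ j.2] at h_mem
    exact h_mem.2
  · rw [← stage_eq_closure_range, stage_eq n le_rfl, stage_eq_closure_range, hx.closure_range,
      inf_top_eq]

end InEchelonForm

end Triangular

/-- Every echelon subgroup of `F_n` is reached from `F_n` by a descending chain of at
most `n` steps, each step passing to the image of a 1-generator subgroup endomorphism. -/
theorem echelon_chain_of_oneGenEndos (n : ℕ) (H : Subgroup (FreeGroup (Fin n)))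
    (hH : IsEchelon H) :
    ∃ m : ℕ, m ≤ n ∧ ∃ c : Fin (m + 1) → Subgroup (FreeGroup (Fin n)),
      c 0 = ⊤ ∧ c (Fin.last m) = H ∧
      ∀ k : Fin m, ∃ φ : ↥(c k.castSucc) →* ↥(c k.castSucc),
        IsOneGenEndo φ ∧ Subgroup.map (c k.castSucc).subtype φ.range = c k.succ := by
  obtain ⟨x, hx_ordered, hH⟩ := hH
  have hx := hx_ordered.isFreeBasis
  obtain ⟨h, h_triangular, rfl⟩ := hH.exists_isTriangular hx
  refine ⟨n, le_rfl, fun i ↦ stage x (n - i) ⊔ Subgroup.closure (Set.range h), ?_, ?_, fun k ↦ ?_⟩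
  · simp [stage_eq_closure_range, hx.closure_range]
  · simp [stage_zero]
  · have sub_eq_succ : n - k.castSucc.val = k.rev + 1 := by
      simp only [Fin.val_castSucc, Fin.val_rev]
      lia
    have sub_eq : n - k.succ.val = k.rev := by
      simp only [Fin.val_succ, Fin.val_rev]
    change IsOneGenImage (stage x (n - k.castSucc.val) ⊔ _) (stage x (n - k.succ.val) ⊔ _)
    rw [sub_eq_succ, sub_eq]
    exact h_triangular.isOneGenImage_stage_sup hx k.rev
end

section
/- Let F_n be the free group of finite rank n with ordered free basis (x_1, …, x_n), let F_i = ⟨x_1, …, x_i⟩, let H be a subgroup of F_n in echelon form with respect to (x_1, …, x_n), and let G be a subgroup with H ≤ G ≤ F_n. Then rk(G ∩ F_i) ≥ rk(H ∩ F_i) for every i = 0, …, n. -/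
/-! Every `G ≤ FreeGroup α` retracts onto `G ⊓ A`, where `A` is generated by some of the free
generators: on the Schreier graph of `G`, a cocycle with values in `G ⊓ A` may be prescribed freely
on the edges, and we take it to be the tautological one on the edges of the `A`-component of the
base point. Hence `rk (G ⊓ A) ≤ rk G`. If the ranks are equal and finite, the retraction is
injective, because a residually finite group has the Hopf property, and so `G ≤ A`. Thus along the
chain of stages the rank of `G` never drops, and (where finite) it goes up by at least one whenever
the intersection grows, whereas the rank of `H` goes up by at most one, and only when the
intersection grows. -/

open Cardinal Function MulAction Subgroup

universe u v w

section Rank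

variable {G : Type u} [Group G]

theorem rk_closure_le (S : Set G) : rk (closure S) ≤ #S :=
  ciInf_le' (fun T : {T : Set G // closure T = closure S} => #T.1) ⟨S, rfl⟩

theorem exists_closure_eq_and_mk_eq_rk (H : Subgroup G) :
    ∃ S : Set G, closure S = H ∧ #S = rk H := by
  have : Nonempty {S : Set G // closure S = H} := ⟨⟨H, H.closure_eq⟩⟩
  obtain ⟨⟨S, hS⟩, hrk⟩ := ciInf_mem fun S : {S : Set G // closure S = H} => #S.1
  exact ⟨S, hS, hrk⟩

theorem lift_rk_map_le {G' : Type v} [Group G'] (f : G →* G') (H : Subgroup G) :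
    lift.{u} (rk (H.map f)) ≤ lift.{v} (rk H) := by
  obtain ⟨S, rfl, hS⟩ := exists_closure_eq_and_mk_eq_rk H
  rw [f.map_closure, ← hS]
  exact (lift_le.2 (rk_closure_le _)).trans mk_image_le_lift

theorem lift_rk_map_of_injective {G' : Type v} [Group G'] {f : G →* G'} (hf : Injective f)
    (H : Subgroup G) : lift.{u} (rk (H.map f)) = lift.{v} (rk H) := by
  refine (lift_rk_map_le f H).antisymm ?_
  obtain ⟨S, hS, hrk⟩ := exists_closure_eq_and_mk_eq_rk (H.map f)
  have hS_range : S ⊆ Set.range f := fun s hs => H.map_le_range f (hS ▸ subset_closure hs)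
  have hH : closure (f ⁻¹' S) = H := by
    apply map_injective hf
    rw [f.map_closure, Set.image_preimage_eq_of_subset hS_range, hS]
  rw [← hrk, ← hH, ← mk_preimage_of_injective_of_subset_range_lift f S hf hS_range]
  exact lift_le.2 (rk_closure_le _)

theorem rk_top_coe (H : Subgroup G) : rk (⊤ : Subgroup H) = rk H := by
  simpa [← MonoidHom.range_eq_map] using (lift_rk_map_of_injective H.subtype_injective ⊤).symm

end Rank

section ResiduallyFinite

theorem exists_perm_coe_eq_mul {G : Type u} [Group G] (S : Set G) [Finite S] (a : G) :
    ∃ p : Equiv.Perm S, ∀ u : S, a * (u : G) ∈ S → (p u : G) = a * u := by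
  classical
  have : Fintype S := Fintype.ofFinite S
  let e : {u : S // a * (u : G) ∈ S} ≃ {v : S // a⁻¹ * (v : G) ∈ S} :=
    { toFun u := ⟨⟨_, u.2⟩, by simp⟩
      invFun v := ⟨⟨_, v.2⟩, by simp⟩
      left_inv u := by ext; simp
      right_inv v := by ext; simp }
  exact ⟨e.extendSubtype, fun u hu => by rw [e.extendSubtype_apply_of_mem u hu]; rfl⟩

variable {α : Type u}

theorem coe_lift_mk_eq_mk_of_forall_suffix_mem {S : Set (FreeGroup α)} {p : α → Equiv.Perm S}
    (hp : ∀ a, ∀ u : S, FreeGroup.of a * (u : FreeGroup α) ∈ S →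
      (p a u : FreeGroup α) = FreeGroup.of a * u)
    (h_one : 1 ∈ S) (L : List (α × Bool)) (hL : ∀ L', L' <:+ L → FreeGroup.mk L' ∈ S) :
    (FreeGroup.lift p (FreeGroup.mk L) ⟨1, h_one⟩ : FreeGroup α) = FreeGroup.mk L := by
  induction L with
  | nil => simp [← FreeGroup.one_eq_mk]
  | cons ab L ih =>
    obtain ⟨a, b⟩ := ab
    have hLS : FreeGroup.mk L ∈ S := hL L (L.suffix_cons _)
    have h_cons : FreeGroup.mk ((a, b) :: L) = FreeGroup.mk [(a, b)] * FreeGroup.mk L := rfl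
    have h_consS := hL _ List.suffix_rfl
    have ih : FreeGroup.lift p (FreeGroup.mk L) ⟨1, h_one⟩ = ⟨FreeGroup.mk L, hLS⟩ :=
      Subtype.ext (ih fun L' hL' => hL L' (hL'.trans (L.suffix_cons _)))
    rw [h_cons, map_mul, Equiv.Perm.mul_apply, ih]
    rw [h_cons] at h_consS
    cases b with
    | true =>
      have h_of : FreeGroup.mk [(a, true)] = FreeGroup.of a := rfl
      rw [h_of] at h_consS ⊢
      simpa using hp a ⟨_, hLS⟩ h_consS
    | false =>
      have h_inv : FreeGroup.mk [(a, false)] = (FreeGroup.of a)⁻¹ := rfl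
      rw [h_inv] at h_consS ⊢
      have h_forward : p a ⟨_, h_consS⟩ = ⟨FreeGroup.mk L, hLS⟩ :=
        Subtype.ext ((hp a ⟨_, h_consS⟩ (by simpa using hLS)).trans (mul_inv_cancel_left _ _))
      simp [Equiv.Perm.inv_eq_iff_eq.2 h_forward.symm]

-- Left multiplication by a generator is a partial injection of the finite set `S` of suffixes of
-- `g`; extending these to permutations of `S` gives an action in which `g` moves `1` to `g`.
instance freeGroup_residuallyFinite : Group.ResiduallyFinite (FreeGroup α) := by
  classical
  refine Group.residuallyFinite_of_forall_exists_finite_monoidHom fun g hg => ?_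
  let S : Set (FreeGroup α) := FreeGroup.mk '' {L | L ∈ g.toWord.tails}
  have hS_mem (L) (hL : L <:+ g.toWord) : FreeGroup.mk L ∈ S := ⟨L, by simpa using hL, rfl⟩
  have hS_finite : Finite S := ((List.finite_toSet _).image _).to_subtype
  choose p hp using fun a => exists_perm_coe_eq_mul S (FreeGroup.of a)
  refine ⟨Equiv.Perm S, inferInstance, inferInstance, FreeGroup.lift p, fun h => hg ?_⟩
  have h_orbit := coe_lift_mk_eq_mk_of_forall_suffix_mem hp (hS_mem [] List.nil_suffix)
    g.toWord hS_mem
  rw [FreeGroup.mk_toWord, h] at h_orbit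
  exact h_orbit.symm

end ResiduallyFinite

section Hopf

theorem closure_range_freeGroupBasis {C : Type u} {κ : Type v} [Group C]
    (b : FreeGroupBasis κ C) : closure (Set.range b) = ⊤ := by
  rw [← FreeGroup.lift_surjective_iff_closure_range_eq_top]
  have h_lift : FreeGroup.lift b = b.repr.symm.toMonoidHom := by
    ext
    simp only [FreeGroup.lift_apply_of]
    rfl
  exact h_lift ▸ b.repr.symm.surjective

theorem exists_comp_eq_of_surjective {G : Type u} {C : Type v} {P : Type w} {κ : Type*}
    [Group G] [Group C] [Group P] [Finite P] {S : Set G} [Finite S] (hS : closure S = ⊤)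
    (b : FreeGroupBasis κ C) (e : S ↪ κ) {ρ : G →* C} (hρ : Surjective ρ) (φ : G →* P) :
    ∃ ψ : C →* P, ψ.comp ρ = φ := by
  let restrict (φ : G →* P) : S → P := fun s => φ s
  let extendLift (v : S → P) : C →* P := b.lift (extend e v 1)
  have h_restrict : Injective restrict := fun _ _ h =>
    MonoidHom.eq_of_eqOn_dense hS fun s hs => congrFun h ⟨s, hs⟩
  have h_extend : Injective extendLift := fun _ _ h =>
    extend_injective e.injective (1 : κ → P) (b.lift.injective h)
  have : Finite (G →* P) := .of_injective restrict h_restrict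
  have h_comp : Injective fun φ : G →* P => (extendLift (restrict φ)).comp ρ := fun _ _ h =>
    h_restrict (h_extend ((MonoidHom.cancel_right hρ).1 h))
  obtain ⟨φ', hφ'⟩ := Finite.surjective_of_injective h_comp φ
  exact ⟨_, hφ'⟩

theorem injective_of_surjective_of_rk_top_le {G C : Type u} [Group G] [Group C]
    [Group.ResiduallyFinite G] [IsFreeGroup C] {ρ : G →* C} (hρ : Surjective ρ)
    (h_fin : rk (⊤ : Subgroup G) < ℵ₀) (h_le : rk (⊤ : Subgroup G) ≤ rk (⊤ : Subgroup C)) :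
    Injective ρ := by
  obtain ⟨S, hS, hrk⟩ := exists_closure_eq_and_mk_eq_rk (⊤ : Subgroup G)
  have : Finite S := lt_aleph0_iff_finite.1 (hrk ▸ h_fin)
  let b := IsFreeGroup.basis C
  have h_card : #S ≤ #(IsFreeGroup.Generators C) :=
    calc #S ≤ rk (⊤ : Subgroup C) := hrk ▸ h_le
      _ ≤ #(Set.range b) := closure_range_freeGroupBasis b ▸ rk_closure_le _
      _ ≤ #(IsFreeGroup.Generators C) := mk_range_le
  obtain ⟨e⟩ := h_card
  refine (injective_iff_map_eq_one ρ).2 fun g hg =>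
    Group.eq_one_iff_forall_finiteIndexNormalSubroup g fun N => ?_
  obtain ⟨ψ, hψ⟩ := exists_comp_eq_of_surjective hS b e hρ (QuotientGroup.mk' N.toSubgroup)
  rw [← FiniteIndexNormalSubgroup.mem_toSubgroup_iff, ← QuotientGroup.eq_one_iff]
  exact (DFunLike.congr_fun hψ g).symm.trans (by simp [hg])

end Hopf

section Cocycle

variable {α : Type u} {X : Type v} {C : Type w} [MulAction (FreeGroup α) X] [Group C]

/-- The cocycle of the action of `FreeGroup α` on `X` with prescribed values `c a : X → C` on the
generators `a`, that is, the first component of the induced homomorphism into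
`(X → C) ⋊ FreeGroup α`. It serves to define homomorphisms on point stabilizers. -/
def freeCocycle (c : α → X → C) (g : FreeGroup α) : X → C :=
  (FreeGroup.lift (fun a => (⟨c a, .of a⟩ : (X → C) ⋊[mulAutArrow] FreeGroup α)) g).left

@[simp]
theorem freeCocycle_of (c : α → X → C) (a : α) : freeCocycle c (.of a) = c a := by
  simp [freeCocycle]

@[simp]
theorem freeCocycle_one (c : α → X → C) : freeCocycle c 1 = 1 := by
  simp [freeCocycle]

theorem freeCocycle_mul (c : α → X → C) (g h : FreeGroup α) (y : X) :
    freeCocycle c (g * h) y = freeCocycle c g y * freeCocycle c h (g⁻¹ • y) := by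
  let Φ := FreeGroup.lift fun a => (⟨c a, .of a⟩ : (X → C) ⋊[mulAutArrow] FreeGroup α)
  have h_right : SemidirectProduct.rightHom.comp Φ = MonoidHom.id _ := by ext; simp [Φ]
  have hg : (Φ g).right = g := DFunLike.congr_fun h_right g
  change (Φ (g * h)).left y = (Φ g).left y * (Φ h).left (g⁻¹ • y)
  rw [map_mul, SemidirectProduct.mul_left, hg]
  rfl

/-- The homomorphism on the stabilizer of `o` obtained by evaluating `freeCocycle c` at `o`. -/
def freeCocycleHom (c : α → X → C) (o : X) : stabilizer (FreeGroup α) o →* C where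
  toFun g := freeCocycle c g o
  map_one' := by simp
  map_mul' g h := by
    rw [coe_mul, freeCocycle_mul, inv_smul_eq_iff.2 (mem_stabilizer_iff.1 g.2).symm]

theorem coe_freeCocycle_of_mem_closure {K : Subgroup (FreeGroup α)} {c : α → X → K} {I : Set α}
    (o : X) (t : X → FreeGroup α)
    (hc : ∀ a ∈ I, ∀ y ∈ orbit (closure (FreeGroup.of '' I)) o,
      (c a y : FreeGroup α) = (t y)⁻¹ * .of a * t ((FreeGroup.of a)⁻¹ • y))
    {g : FreeGroup α} (hg : g ∈ closure (FreeGroup.of '' I))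
    {y : X} (hy : y ∈ orbit (closure (FreeGroup.of '' I)) o) :
    ((freeCocycle c g y : K) : FreeGroup α) = (t y)⁻¹ * g * t (g⁻¹ • y) := by
  induction hg using closure_induction generalizing y with
  | mem _ h =>
    obtain ⟨a, ha, rfl⟩ := h
    rw [freeCocycle_of, hc a ha y hy]
  | one => simp
  | mul g h hg _ ihg ihh =>
    have hgy : g⁻¹ • y ∈ orbit _ o := mem_orbit_of_mem_orbit (⟨g, hg⟩⁻¹ : Subgroup.closure _) hy
    rw [freeCocycle_mul, coe_mul, ihg hy, ihh hgy, mul_inv_rev, mul_smul]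
    group
  | inv g hg ih =>
    have hgy : g • y ∈ orbit _ o := mem_orbit_of_mem_orbit (⟨g, hg⟩ : Subgroup.closure _) hy
    have h_mul := congrArg Subtype.val (freeCocycle_mul c g g⁻¹ (g • y))
    rw [mul_inv_cancel, freeCocycle_one, inv_smul_smul, coe_mul, ih hgy, inv_smul_smul] at h_mul
    rw [inv_inv, eq_inv_mul_of_mul_eq h_mul.symm]
    simp [mul_assoc]

end Cocycle

section Retraction

theorem exists_orbit_section {A : Type u} {X : Type v} [Group A] [MulAction A X] (o : X) :
    ∃ t : X → A, t o = 1 ∧ ∀ y ∈ orbit A o, t y • o = y := by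
  let s : X → A := invFun fun a => a • o
  have hs {y : X} (hy : y ∈ orbit A o) : s y • o = y := invFun_eq hy
  refine ⟨fun y => s y * (s o)⁻¹, mul_inv_cancel _, fun y hy => ?_⟩
  rw [mul_smul, inv_smul_eq_iff.2 (hs (mem_orbit_self o)).symm, hs hy]

variable {α : Type u}

theorem exists_retraction_inf_closure (G : Subgroup (FreeGroup α)) (I : Set α) :
    ∃ ρ : G →* (G ⊓ closure (FreeGroup.of '' I) : Subgroup (FreeGroup α)),
      LeftInverse ρ (inclusion inf_le_left) := by
  classical
  set A := closure (FreeGroup.of '' I)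
  let o : FreeGroup α ⧸ G := (1 : FreeGroup α)
  have hG : stabilizer (FreeGroup α) o = G := stabilizer_quotient G
  obtain ⟨t, ht_one, ht⟩ := exists_orbit_section (A := A) o
  let d (g : FreeGroup α) (y : FreeGroup α ⧸ G) : FreeGroup α := (t y)⁻¹ * g * t (g⁻¹ • y)
  have hd {g} (hg : g ∈ A) {y} (hy : y ∈ orbit A o) : d g y ∈ G ⊓ A := by
    have hgy : g⁻¹ • y ∈ orbit A o := mem_orbit_of_mem_orbit (⟨g, hg⟩⁻¹ : A) hy
    have hty : (t y : FreeGroup α) • o = y := ht y hy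
    have htgy : (t (g⁻¹ • y) : FreeGroup α) • o = g⁻¹ • y := ht _ hgy
    refine ⟨?_, A.mul_mem (A.mul_mem (A.inv_mem (t y).2) hg) (t _).2⟩
    change d g y ∈ G
    rw [← hG, mem_stabilizer_iff]
    change ((t y : FreeGroup α)⁻¹ * g * t (g⁻¹ • y)) • o = o
    rw [mul_smul, mul_smul, htgy, smul_inv_smul, inv_smul_eq_iff, hty]
  let c (a : α) (y : FreeGroup α ⧸ G) : (G ⊓ A : Subgroup (FreeGroup α)) :=
    if h : d (.of a) y ∈ G ⊓ A then ⟨_, h⟩ else 1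
  have hc : ∀ a ∈ I, ∀ y ∈ orbit A o, (c a y : FreeGroup α) = d (.of a) y := fun a ha y hy =>
    congrArg Subtype.val (dif_pos (hd (subset_closure ⟨a, ha, rfl⟩) hy))
  refine ⟨(freeCocycleHom c o).comp (inclusion hG.ge), fun g => Subtype.ext ?_⟩
  have hg : (g : FreeGroup α)⁻¹ • o = o :=
    inv_smul_eq_iff.2 (mem_stabilizer_iff.1 (hG.ge g.2.1)).symm
  calc ((freeCocycle c g o : ↥(G ⊓ A)) : FreeGroup α)
      = (t o : FreeGroup α)⁻¹ * g * t ((g : FreeGroup α)⁻¹ • o) :=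
        coe_freeCocycle_of_mem_closure o (fun y => t y) hc g.2.2 (mem_orbit_self o)
    _ = g := by simp [hg, ht_one]

theorem rk_inf_closure_image_of_le (G : Subgroup (FreeGroup α)) (I : Set α) :
    rk (G ⊓ closure (FreeGroup.of '' I)) ≤ rk G := by
  obtain ⟨ρ, hρ⟩ := exists_retraction_inf_closure G I
  simpa [map_top_of_surjective ρ hρ.surjective, rk_top_coe] using lift_rk_map_le ρ ⊤

theorem rk_inf_closure_image_of_add_one_le {G : Subgroup (FreeGroup α)} {I : Set α}
    (hG : ¬ G ≤ closure (FreeGroup.of '' I)) :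
    rk (G ⊓ closure (FreeGroup.of '' I)) + 1 ≤ rk G := by
  rcases lt_or_ge (rk G) ℵ₀ with h_fin | h_inf
  · obtain ⟨ρ, hρ⟩ := exists_retraction_inf_closure G I
    suffices rk (G ⊓ closure (FreeGroup.of '' I)) < rk G from add_one_le_of_lt this
    refine (rk_inf_closure_image_of_le G I).lt_of_not_ge fun h_le => hG fun g hg => ?_
    have h_inj : Injective ρ := injective_of_surjective_of_rk_top_le hρ.surjective
      (by rwa [rk_top_coe]) (by rwa [rk_top_coe, rk_top_coe])
    have hg_fixed : (ρ ⟨g, hg⟩ : FreeGroup α) = g :=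
      congrArg Subtype.val (hρ.rightInverse_of_injective h_inj ⟨g, hg⟩)
    exact hg_fixed ▸ (ρ ⟨g, hg⟩).2.2
  · calc rk (G ⊓ closure (FreeGroup.of '' I)) + 1 ≤ rk G + 1 := by
          gcongr; exact rk_inf_closure_image_of_le G I
      _ = rk G := add_one_eq h_inf

end Retraction

section FreeFamily

variable {ι : Type u} {F : Type v} [Group F] {x : ι → F} {G : Subgroup F} {I : Set ι}

theorem closure_image_eq_map_lift (x : ι → F) (I : Set ι) :
    closure (x '' I) = (closure (FreeGroup.of '' I)).map (FreeGroup.lift x) := by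
  simp [MonoidHom.map_closure, Set.image_image]

theorem rk_inf_closure_image_le (hx : Injective (FreeGroup.lift x))
    (hG : G ≤ (FreeGroup.lift x).range) : rk (G ⊓ closure (x '' I)) ≤ rk G := by
  obtain ⟨K, rfl⟩ : ∃ K, map (FreeGroup.lift x) K = G := ⟨_, map_comap_eq_self hG⟩
  rw [closure_image_eq_map_lift, ← map_inf _ _ _ hx, ← lift_le.{u},
    lift_rk_map_of_injective hx, lift_rk_map_of_injective hx, lift_le]
  exact rk_inf_closure_image_of_le K I

theorem rk_inf_closure_image_add_one_le (hx : Injective (FreeGroup.lift x))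
    (hG : G ≤ (FreeGroup.lift x).range) (hGI : ¬ G ≤ closure (x '' I)) :
    rk (G ⊓ closure (x '' I)) + 1 ≤ rk G := by
  obtain ⟨K, rfl⟩ : ∃ K, map (FreeGroup.lift x) K = G := ⟨_, map_comap_eq_self hG⟩
  rw [closure_image_eq_map_lift, map_le_map_iff_of_injective hx] at hGI
  rw [closure_image_eq_map_lift, ← map_inf _ _ _ hx, ← lift_le.{u}, lift_add, lift_one,
    lift_rk_map_of_injective hx, lift_rk_map_of_injective hx]
  simpa only [lift_add, lift_one] using lift_le.2 (rk_inf_closure_image_of_add_one_le hGI)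

end FreeFamily

section Echelon

variable {n : ℕ} {F : Type u} [Group F] {x : Fin n → F}

theorem stage_le_stage_succ (x : Fin n → F) (i : ℕ) : stage x i ≤ stage x (i + 1) :=
  Subgroup.closure_mono (Set.image_mono fun _ hj => Nat.lt_succ_of_lt hj)

theorem inf_stage_le_range_lift (x : Fin n → F) (G : Subgroup F) (i : ℕ) :
    G ⊓ stage x i ≤ (FreeGroup.lift x).range := by
  rw [FreeGroup.range_lift_eq_closure]
  exact inf_le_right.trans (Subgroup.closure_mono (Set.image_subset_range _ _))

theorem inf_stage_succ_inf_stage (x : Fin n → F) (G : Subgroup F) (i : ℕ) :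
    G ⊓ stage x (i + 1) ⊓ stage x i = G ⊓ stage x i := by
  rw [inf_assoc, inf_eq_right.2 (stage_le_stage_succ x i)]

theorem rk_inf_stage_le_succ (hx : Injective (FreeGroup.lift x)) (G : Subgroup F) (i : ℕ) :
    rk (G ⊓ stage x i) ≤ rk (G ⊓ stage x (i + 1)) := by
  rw [← inf_stage_succ_inf_stage]
  exact rk_inf_closure_image_le hx (inf_stage_le_range_lift x G (i + 1))

theorem rk_inf_stage_add_one_le_succ (hx : Injective (FreeGroup.lift x)) {G : Subgroup F} {i : ℕ}
    (hG : ¬ G ⊓ stage x (i + 1) ≤ stage x i) :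
    rk (G ⊓ stage x i) + 1 ≤ rk (G ⊓ stage x (i + 1)) := by
  rw [← inf_stage_succ_inf_stage]
  exact rk_inf_closure_image_add_one_le hx (inf_stage_le_range_lift x G (i + 1)) hG

theorem echelon_rank_stages_le_general (hx : Injective (FreeGroup.lift x)) {H G : Subgroup F}
    (hE : InEchelonForm x H) (hHG : H ≤ G) {i : ℕ} (hi : i ≤ n) :
    rk (H ⊓ stage x i) ≤ rk (G ⊓ stage x i) := by
  induction i with
  | zero => simp [stage]
  | succ i ih =>
    have ih : rk (H ⊓ stage x i) ≤ rk (G ⊓ stage x i) := ih (by omega)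
    by_cases hH : H ⊓ stage x (i + 1) ≤ stage x i
    · calc rk (H ⊓ stage x (i + 1)) = rk (H ⊓ stage x i) := by
            rw [← inf_stage_succ_inf_stage x H i, inf_eq_left.2 hH]
        _ ≤ rk (G ⊓ stage x i) := ih
        _ ≤ rk (G ⊓ stage x (i + 1)) := rk_inf_stage_le_succ hx G i
    · have hG : ¬ G ⊓ stage x (i + 1) ≤ stage x i := fun h =>
        hH ((inf_le_inf_right _ hHG).trans h)
      calc rk (H ⊓ stage x (i + 1)) ≤ rk (H ⊓ stage x i) + 1 := hE i hi
        _ ≤ rk (G ⊓ stage x i) + 1 := by gcongr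
        _ ≤ rk (G ⊓ stage x (i + 1)) := rk_inf_stage_add_one_le_succ hx hG

end Echelon

/-- If `H` is in echelon form with respect to the ordered basis `x` and `H ≤ G ≤ F_n`,
then `rk (H ⊓ F_i) ≤ rk (G ⊓ F_i)` for every `i = 0, …, n`. -/
theorem echelon_rank_stages_le (n : ℕ) (x : Fin n → FreeGroup (Fin n))
    (hx : IsOrderedBasis x) (H G : Subgroup (FreeGroup (Fin n)))
    (hE : InEchelonForm x H) (hHG : H ≤ G) :
    ∀ i : ℕ, i ≤ n → rk (H ⊓ stage x i) ≤ rk (G ⊓ stage x i) :=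
  fun _ hi => echelon_rank_stages_le_general hx.1 hE hHG hi
end

section
/- Let F_3 be the free group with free basis {x, y, z} and let H = ⟨x²y²x², y²z²y², z²x²y²x²z²⟩. Then H is inert in F_3: rk(H ∩ G) ≤ rk(G) for every finitely generated subgroup G of F_3. -/
/-- The generators of `F_3`. -/
def xx : FreeGroup (Fin 3) := FreeGroup.of 0
def yy : FreeGroup (Fin 3) := FreeGroup.of 1
def zz : FreeGroup (Fin 3) := FreeGroup.of 2

/-- The subgroup `H = ⟨x²y²x², y²z²y², z²x²y²x²z²⟩` of `F_3`. -/
def Hex : Subgroup (FreeGroup (Fin 3)) :=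
  Subgroup.closure {xx^2 * yy^2 * xx^2, yy^2 * zz^2 * yy^2, zz^2 * xx^2 * yy^2 * xx^2 * zz^2}

/-! Let `φ` send the `i`-th generator to `w i * l i`, where `w i` is a positive word and the final
letters `l i` are distinct, and let `K` be a subgroup generated by `d` elements. Both `K` and
`φ⁻¹(K)` are stabilizers of the base point of `F ⧸ K`, for the action of `F` and for its pullback
along `φ`. Paths are read from right to left, so each edge `q → φ(i) • q` of the pulled-back
Schreier graph subdivides to a positive path starting with the edge `(q, l i)`. In a finite
subdivided subgraph every added vertex is the source of an edge other than these first edges, so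
subdividing does not decrease `#edges - #vertices`. Hence the first Betti number of a finite
connected subgraph containing any finite set of basis loops of `φ⁻¹(K)` is at most `d`. -/

universe u

section Rank

variable {G G' : Type u} [Group G] [Group G']

lemma rk_le_of_closure_eq {H : Subgroup G} {S : Set G} (hS : Subgroup.closure S = H) :
    rk H ≤ Cardinal.mk S :=
  ciInf_le' (fun S : {S : Set G // Subgroup.closure S = H} => Cardinal.mk S.1) ⟨S, hS⟩

lemma exists_closure_eq_mk_eq_rk (H : Subgroup G) :
    ∃ S : Set G, Subgroup.closure S = H ∧ Cardinal.mk S = rk H := by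
  have : Nonempty {S : Set G // Subgroup.closure S = H} := ⟨⟨H, Subgroup.closure_eq H⟩⟩
  obtain ⟨S, hS⟩ := ciInf_mem fun S : {S : Set G // Subgroup.closure S = H} => Cardinal.mk S.1
  exact ⟨S.1, S.2, hS⟩

lemma exists_finset_closure_eq_card_eq_rk {H : Subgroup G} (hH : H.FG) :
    ∃ S : Finset G, Subgroup.closure (S : Set G) = H ∧ (S.card : Cardinal) = rk H := by
  obtain ⟨S, hS, hcard⟩ := exists_closure_eq_mk_eq_rk H
  obtain ⟨S', hS'⟩ := hH
  have hlt : Cardinal.mk S < Cardinal.aleph0 :=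
    hcard.trans_lt ((rk_le_of_closure_eq hS').trans_lt (Cardinal.lt_aleph0_of_finite _))
  lift S to Finset G using Cardinal.lt_aleph0_iff_set_finite.1 hlt
  exact ⟨S, hS, by simpa using hcard⟩

lemma rk_map_le (f : G →* G') (H : Subgroup G) : rk (H.map f) ≤ rk H := by
  obtain ⟨S, rfl, hcard⟩ := exists_closure_eq_mk_eq_rk H
  rw [← hcard, MonoidHom.map_closure]
  exact (rk_le_of_closure_eq rfl).trans Cardinal.mk_image_le

lemma closure_range_freeGroupBasis_s9 {ι : Type*} (B : FreeGroupBasis ι G) :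
    Subgroup.closure (Set.range B) = ⊤ := by
  have hrange : Set.range B = B.repr.symm.toMonoidHom '' Set.range FreeGroup.of := by
    rw [← Set.range_comp]
    rfl
  rw [hrange, ← MonoidHom.map_closure, FreeGroup.closure_range_of, ← MonoidHom.range_eq_map]
  exact MonoidHom.range_eq_top.2 B.repr.symm.surjective

lemma rk_le_mk_of_freeGroupBasis {ι : Type u} {H : Subgroup G} (B : FreeGroupBasis ι H) :
    rk H ≤ Cardinal.mk ι := by
  have hclosure : Subgroup.closure (Set.range fun i => (B i : G)) = H := by
    rw [show (fun i => (B i : G)) = H.subtype ∘ B from rfl, Set.range_comp,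
      ← MonoidHom.map_closure, closure_range_freeGroupBasis_s9, ← MonoidHom.range_eq_map,
      Subgroup.range_subtype]
  exact (rk_le_of_closure_eq hclosure).trans Cardinal.mk_range_le

end Rank

section LinearAlgebra

variable {R M N : Type*} [Ring R] [AddCommGroup M] [Module R M] [AddCommGroup N] [Module R N]

lemma linearIndependent_sumElim_of_map {ι κ : Type*} {v : ι → M} {w : κ → M} (T : M →ₗ[R] N)
    (hv : LinearIndependent R v) (hTv : ∀ i, T (v i) = 0) (hTw : LinearIndependent R (T ∘ w)) :
    LinearIndependent R (Sum.elim v w) := by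
  refine hv.sum_type (hTw.of_comp T) (Disjoint.mono_left ?_ (Submodule.range_ker_disjoint hTw).symm)
  rw [Submodule.span_le]
  rintro _ ⟨i, rfl⟩
  exact hTv i

lemma card_le_card_of_linearIndependent_of_mem_span [StrongRankCondition R] {ι : Type*} [Fintype ι]
    {v : ι → M} (hv : LinearIndependent R v) (T : Finset M)
    (hT : ∀ i, v i ∈ Submodule.span R (T : Set M)) : Fintype.card ι ≤ T.card := by
  simpa using linearIndependent_le_span_aux' v hv (T : Set M) (Set.range_subset_iff.2 hT)

end LinearAlgebra

section PathChain

variable {X Q : Type*} (ρ : FreeGroup X →* Equiv.Perm Q)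

/-- The stabilizer of `b`, i.e. the fundamental group at `b` of the Schreier graph of the action
`ρ`. The graph has vertex set `Q`, and the pair `(q, x)` encodes its edge from `q` to `x • q`. -/
def pointStabilizer (b : Q) : Subgroup (FreeGroup X) :=
  (MulAction.stabilizer (Equiv.Perm Q) b).comap ρ

lemma mem_pointStabilizer {b : Q} {g : FreeGroup X} : g ∈ pointStabilizer ρ b ↔ ρ g b = b :=
  Iff.rfl

/-- The skew product of the action `ρ` with the group of 1-chains of its Schreier graph: a generator
acting at `q` adds the edge it traverses. -/
noncomputable def skewProduct : FreeGroup X →* Equiv.Perm (Q × (Q × X →₀ ℤ)) :=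
  FreeGroup.lift fun x =>
    Equiv.prodShear (ρ (.of x)) fun q => Equiv.addRight (Finsupp.single (q, x) 1)

/-- The 1-chain of the path in the Schreier graph of `ρ` that starts at `q` and is labelled by `g`,
read from right to left. -/
noncomputable def pathChain (q : Q) (g : FreeGroup X) : Q × X →₀ ℤ := (skewProduct ρ g (q, 0)).2

lemma skewProduct_apply (g : FreeGroup X) (q : Q) (c : Q × X →₀ ℤ) :
    skewProduct ρ g (q, c) = (ρ g q, c + pathChain ρ q g) := by
  suffices h : ∀ q, ∃ d, ∀ c, skewProduct ρ g (q, c) = (ρ g q, c + d) by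
    obtain ⟨d, hd⟩ := h q
    simp [pathChain, hd]
  induction g with
  | C1 => exact fun q => ⟨0, by simp⟩
  | of x => exact fun q => ⟨Finsupp.single (q, x) 1, by simp [skewProduct]⟩
  | inv_of x ih =>
    intro q
    obtain ⟨d, hd⟩ := ih ((ρ (.of x))⁻¹ q)
    refine ⟨-d, fun c => ?_⟩
    rw [map_inv, Equiv.Perm.inv_eq_iff_eq, map_inv, hd]
    simp
  | mul g h hg hh =>
    intro q
    obtain ⟨d, hd⟩ := hh q
    obtain ⟨e, he⟩ := hg (ρ h q)
    exact ⟨d + e, fun c => by simp [hd, he, add_assoc]⟩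

@[simp]
lemma pathChain_one (q : Q) : pathChain ρ q 1 = 0 := by simp [pathChain]

@[simp]
lemma pathChain_of (q : Q) (x : X) : pathChain ρ q (.of x) = Finsupp.single (q, x) 1 := by
  simp [pathChain, skewProduct]

lemma pathChain_mul (q : Q) (g h : FreeGroup X) :
    pathChain ρ q (g * h) = pathChain ρ q h + pathChain ρ (ρ h q) g := by
  rw [pathChain, map_mul, Equiv.Perm.mul_apply, skewProduct_apply, skewProduct_apply, zero_add]

lemma pathChain_inv (q : Q) (g : FreeGroup X) :
    pathChain ρ q g⁻¹ = -pathChain ρ (ρ g⁻¹ q) g := by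
  simpa [add_eq_zero_iff_eq_neg] using (pathChain_mul ρ q g g⁻¹).symm

lemma linearCombination_pathChain {M : Type*} [AddCommGroup M] (f : Q × X → M)
    (d : FreeGroup X → M) (b : Q) (hd : ∀ x g, d (.of x * g) = d g + f (ρ g b, x))
    (g : FreeGroup X) : Finsupp.linearCombination ℤ f (pathChain ρ b g) = d g - d 1 := by
  suffices h : ∀ h, d (g * h) = d h + Finsupp.linearCombination ℤ f (pathChain ρ (ρ h b) g) by
    simpa [eq_sub_iff_add_eq'] using (h 1).symm
  induction g with
  | C1 => simp
  | of x => exact fun h => by simp [hd]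
  | inv_of x ih =>
    intro h
    have := ih ((FreeGroup.of x)⁻¹ * h)
    simp_all [pathChain_inv]
  | mul g g' hg hg' =>
    intro h
    rw [mul_assoc, hg, hg', pathChain_mul, map_add, add_assoc, map_mul, Equiv.Perm.mul_apply]

lemma exists_linearMap_pathChain_eq {M : Type*} [AddCommGroup M] (b : Q)
    (h : pointStabilizer ρ b →* Multiplicative M) :
    ∃ T : (Q × X →₀ ℤ) →ₗ[ℤ] M, ∀ g : pointStabilizer ρ b, T (pathChain ρ b g) = (h g).toAdd := by
  -- `h` extends to an equivariant `d`, whose coboundary descends to the edges of the graph.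
  obtain ⟨d, hd⟩ : ∃ d : FreeGroup X → M, ∀ g (k : pointStabilizer ρ b),
      d (g * k) = d g + (h k).toAdd := by
    let out (g : FreeGroup X) : FreeGroup X := (g : FreeGroup X ⧸ pointStabilizer ρ b).out
    have out_mem (g : FreeGroup X) : (out g)⁻¹ * g ∈ pointStabilizer ρ b :=
      QuotientGroup.eq.1 (QuotientGroup.out_eq' _)
    refine ⟨fun g => (h ⟨_, out_mem g⟩).toAdd, fun g k => ?_⟩
    have out_mul : out (g * k) = out g := by simp [out]
    have hmul : (⟨_, out_mem (g * k)⟩ : pointStabilizer ρ b) = ⟨_, out_mem g⟩ * k :=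
      Subtype.ext (by simp [out_mul, mul_assoc])
    simp only [hmul, map_mul, toAdd_mul]
  let t (q : Q) : FreeGroup X := Function.invFun (fun g => ρ g b) q
  have ht (g : FreeGroup X) : g⁻¹ * t (ρ g b) ∈ pointStabilizer ρ b := by
    rw [mem_pointStabilizer, map_mul, Equiv.Perm.mul_apply,
      show ρ (t (ρ g b)) b = ρ g b from Function.apply_invFun_apply (f := fun g => ρ g b)]
    simp
  refine ⟨Finsupp.linearCombination ℤ fun e => d (.of e.2 * t e.1) - d (t e.1), fun g => ?_⟩
  rw [linearCombination_pathChain ρ _ d b fun x g => ?_]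
  · simpa [sub_eq_iff_eq_add'] using hd 1 g
  · have h₁ := hd g ⟨_, ht g⟩
    have h₂ := hd (.of x * g) ⟨_, ht g⟩
    simp only [mul_assoc, mul_inv_cancel_left] at h₁ h₂
    simp [h₁, h₂]

lemma linearIndependent_pathChain_basis {ι : Type*} (b : Q)
    (B : FreeGroupBasis ι (pointStabilizer ρ b)) :
    LinearIndependent ℤ fun i => pathChain ρ b (B i : FreeGroup X) := by
  obtain ⟨T, hT⟩ := exists_linearMap_pathChain_eq ρ b
    (B.lift fun i => Multiplicative.ofAdd (Finsupp.single i (1 : ℤ)))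
  refine LinearIndependent.of_comp T ?_
  have hTB : (T ∘ fun i => pathChain ρ b (B i : FreeGroup X)) = fun i => Finsupp.single i 1 := by
    funext i
    simp [hT]
  rw [hTB]
  exact Finsupp.linearIndependent_single_one ℤ ι

lemma pathChain_mem_span_of_mem_closure {b : Q} {S : Set (FreeGroup X)}
    (hS : Subgroup.closure S = pointStabilizer ρ b) {g : FreeGroup X}
    (hg : g ∈ pointStabilizer ρ b) : pathChain ρ b g ∈ Submodule.span ℤ (pathChain ρ b '' S) := by
  have hfix {g} (hg : g ∈ Subgroup.closure S) : ρ g b = b := by rwa [hS] at hg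
  rw [← hS] at hg
  induction hg using Subgroup.closure_induction with
  | mem s hs => exact Submodule.subset_span ⟨s, hs, rfl⟩
  | one => simp
  | mul g h _ hh ihg ihh =>
    rw [pathChain_mul, hfix hh]
    exact add_mem ihh ihg
  | inv g hg ih =>
    rw [pathChain_inv, hfix (inv_mem hg)]
    exact neg_mem ih

end PathChain

section Subgraph

variable {X Q : Type*} (ρ : FreeGroup X →* Equiv.Perm Q)

/-- The finite vertex set `V` and the finite edge set `E` form a subgraph of the Schreier graph
of `ρ`. -/
def IsSubgraph (V : Finset Q) (E : Finset (Q × X)) : Prop :=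
  ∀ e ∈ E, e.1 ∈ V ∧ ρ (.of e.2) e.1 ∈ V

/-- The subgraph `(V, E)` of the Schreier graph of `ρ` is connected and contains the base point `b`.
Connectedness is expressed by paths from `b` whose 1-chain is supported in `E`. -/
structure IsConnectedSubgraph (b : Q) (V : Finset Q) (E : Finset (Q × X)) : Prop where
  isSubgraph : IsSubgraph ρ V E
  base_mem : b ∈ V
  exists_path : ∀ v ∈ V, ∃ g, ρ g b = v ∧ pathChain ρ b g ∈ Finsupp.supported ℤ ℤ (E : Set (Q × X))

variable {ρ}

lemma IsSubgraph.card_add_one_le {V : Finset Q} {E : Finset (Q × X)} (hE : IsSubgraph ρ V E)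
    {b : Q} (hb : b ∈ V) (htrans : ∀ v ∈ V, ∃ g, ρ g b = v) {S : Finset (FreeGroup X)}
    (hS : Subgroup.closure (S : Set (FreeGroup X)) = pointStabilizer ρ b) :
    E.card + 1 ≤ V.card + S.card := by
  classical
  choose! t ht using htrans
  let T : Finset (Q × X →₀ ℤ) :=
    S.image (pathChain ρ b) ∪ (V.erase b).image fun v => pathChain ρ b (t v)
  have hloop {g} (hg : g ∈ pointStabilizer ρ b) : pathChain ρ b g ∈ Submodule.span ℤ T :=
    Submodule.span_mono (by simp [T]) (pathChain_mem_span_of_mem_closure ρ hS hg)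
  have hpath {g} (hg : ρ g b ∈ V) : pathChain ρ b g ∈ Submodule.span ℤ T := by
    by_cases hgb : ρ g b = b
    · exact hloop hgb
    · have hmem : (t (ρ g b))⁻¹ * g ∈ pointStabilizer ρ b := by
        rw [mem_pointStabilizer, map_mul, map_inv, Equiv.Perm.mul_apply, Equiv.Perm.inv_eq_iff_eq,
          ht _ hg]
      have hmul := pathChain_mul ρ b (t (ρ g b)) ((t (ρ g b))⁻¹ * g)
      rw [mul_inv_cancel_left, (mem_pointStabilizer ρ).1 hmem] at hmul
      rw [hmul]
      exact add_mem (hloop hmem) (Submodule.subset_span <| Finset.mem_union_right _ <|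
        Finset.mem_image_of_mem _ (Finset.mem_erase.2 ⟨hgb, hg⟩))
  have hedge (e : E) : Finsupp.single e.1 (1 : ℤ) ∈ Submodule.span ℤ (T : Set (Q × X →₀ ℤ)) := by
    obtain ⟨⟨q, x⟩, he⟩ := e
    obtain ⟨hq, hxq⟩ := hE _ he
    have hmul := pathChain_mul ρ b (.of x) (t q)
    rw [ht q hq, pathChain_of, ← sub_eq_iff_eq_add'] at hmul
    rw [← hmul]
    exact sub_mem (hpath (by simpa [ht q hq] using hxq)) (hpath (by rwa [ht q hq]))
  have hindep : LinearIndependent ℤ fun e : E => Finsupp.single e.1 (1 : ℤ) :=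
    (Finsupp.linearIndependent_single_one ℤ _).comp _ Subtype.val_injective
  have hcard : E.card ≤ T.card := by
    simpa using card_le_card_of_linearIndependent_of_mem_span hindep T hedge
  have hT : T.card ≤ S.card + (V.erase b).card :=
    (Finset.card_union_le _ _).trans (add_le_add Finset.card_image_le Finset.card_image_le)
  have := Finset.card_erase_add_one hb
  omega

lemma IsConnectedSubgraph.card_add_card_le {b : Q} {V : Finset Q} {E : Finset (Q × X)}
    (hE : IsConnectedSubgraph ρ b V E) {ι : Type*} [Fintype ι] {γ : ι → FreeGroup X}
    (hγ : ∀ i, γ i ∈ pointStabilizer ρ b)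
    (hindep : LinearIndependent ℤ fun i => pathChain ρ b (γ i))
    (hsupp : ∀ i, pathChain ρ b (γ i) ∈ Finsupp.supported ℤ ℤ (E : Set (Q × X))) :
    Fintype.card ι + V.card ≤ E.card + 1 := by
  classical
  choose! t ht hsuppt using hE.exists_path
  let δ (q : Q) : Q →₀ ℤ := (Finsupp.single q 1).erase b
  have hδb : δ b = 0 := Finsupp.erase_single
  let boundary : (Q × X →₀ ℤ) →ₗ[ℤ] (Q →₀ ℤ) :=
    Finsupp.linearCombination ℤ fun e => δ (ρ (.of e.2) e.1) - δ e.1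
  have hboundary (g : FreeGroup X) : boundary (pathChain ρ b g) = δ (ρ g b) := by
    rw [linearCombination_pathChain ρ _ (fun g => δ (ρ g b)) b (by simp)]
    simp [hδb]
  let w (v : V.erase b) : Q × X →₀ ℤ := pathChain ρ b (t v)
  have hw : boundary ∘ w = fun v : V.erase b => Finsupp.single v.1 1 := by
    funext v
    obtain ⟨hvb, hv⟩ := Finset.mem_erase.1 v.2
    simp [w, hboundary, ht _ hv, δ, Finsupp.erase_single_ne hvb.symm]
  have hsum : LinearIndependent ℤ (Sum.elim (fun i => pathChain ρ b (γ i)) w) := by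
    refine linearIndependent_sumElim_of_map boundary hindep (fun i => ?_) ?_
    · rw [hboundary, (mem_pointStabilizer ρ).1 (hγ i), hδb]
    · rw [hw]
      exact (Finsupp.linearIndependent_single_one ℤ _).comp _ Subtype.val_injective
  have hle := card_le_card_of_linearIndependent_of_mem_span hsum
    (E.image fun e => Finsupp.single e (1 : ℤ)) fun i => by
      rw [Finset.coe_image, ← Finsupp.supported_eq_span_single]
      exact i.rec hsupp fun v => hsuppt _ (Finset.mem_of_mem_erase v.2)
  rw [Fintype.card_sum, Fintype.card_coe] at hle
  have := hle.trans Finset.card_image_le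
  have := Finset.card_erase_add_one hE.base_mem
  omega

lemma isConnectedSubgraph_singleton (b : Q) :
    IsConnectedSubgraph ρ b {b} (∅ : Finset (Q × X)) where
  isSubgraph := by simp [IsSubgraph]
  base_mem := Finset.mem_singleton_self b
  exists_path := by
    rintro v hv
    exact ⟨1, by simpa using (Finset.mem_singleton.1 hv).symm, by simp⟩

lemma IsConnectedSubgraph.insert_edge [DecidableEq Q] [DecidableEq X] {b : Q} {V : Finset Q}
    {E : Finset (Q × X)} (hE : IsConnectedSubgraph ρ b V E) {q : Q} {x : X}
    (hq : q ∈ V ∨ ρ (.of x) q ∈ V) :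
    IsConnectedSubgraph ρ b (insert q (insert (ρ (.of x) q) V)) (insert (q, x) E) := by
  let E' := insert (q, x) E
  have hmono : Finsupp.supported ℤ ℤ (E : Set (Q × X)) ≤ Finsupp.supported ℤ ℤ (E' : Set (Q × X)) :=
    Finsupp.supported_mono (by simp [E'])
  have hsingle : Finsupp.single (q, x) (1 : ℤ) ∈ Finsupp.supported ℤ ℤ (E' : Set (Q × X)) :=
    Finsupp.single_mem_supported ℤ 1 (by simp [E'])
  have hreach : ∀ v ∈ V, ∃ g, ρ g b = v ∧ pathChain ρ b g ∈ Finsupp.supported ℤ ℤ (E' : Set _) :=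
    fun v hv => (hE.exists_path v hv).imp fun g hg => ⟨hg.1, hmono hg.2⟩
  refine ⟨?_, by simp [hE.base_mem], ?_⟩
  · simp only [IsSubgraph, Finset.forall_mem_insert]
    refine ⟨by simp, fun e he => ?_⟩
    obtain ⟨hsource, htarget⟩ := hE.isSubgraph e he
    exact ⟨by simp [hsource], by simp [htarget]⟩
  · simp only [Finset.forall_mem_insert]
    refine ⟨hq.elim (hreach q) fun hxq => ?_, hq.elim (fun hq => ?_) (hreach _), hreach⟩
    · obtain ⟨g, hg, hsupp⟩ := hreach _ hxq
      refine ⟨(.of x)⁻¹ * g, by simp [hg], ?_⟩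
      rw [pathChain_mul, pathChain_inv, hg, show ρ (.of x)⁻¹ (ρ (.of x) q) = q by simp,
        pathChain_of]
      exact add_mem hsupp (neg_mem hsingle)
    · obtain ⟨g, rfl, hsupp⟩ := hreach q hq
      refine ⟨.of x * g, by simp, ?_⟩
      rw [pathChain_mul, pathChain_of]
      exact add_mem hsupp hsingle

lemma IsConnectedSubgraph.exists_extend_path {b : Q} {V : Finset Q} {E : Finset (Q × X)}
    (hE : IsConnectedSubgraph ρ b V E) {q : Q} (hq : q ∈ V) (g : FreeGroup X) :
    ∃ V' E', IsConnectedSubgraph ρ b V' E' ∧ E ⊆ E' ∧ ρ g q ∈ V' ∧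
      pathChain ρ q g ∈ Finsupp.supported ℤ ℤ (E' : Set (Q × X)) := by
  classical
  induction g generalizing q V E with
  | C1 => exact ⟨V, E, hE, subset_rfl, by simpa, by simp⟩
  | of x =>
    refine ⟨_, _, hE.insert_edge (x := x) (.inl hq), Finset.subset_insert _ _, by simp, ?_⟩
    rw [pathChain_of]
    exact Finsupp.single_mem_supported ℤ 1 (by simp)
  | inv_of x _ =>
    refine ⟨_, _, hE.insert_edge (q := ρ (.of x)⁻¹ q) (x := x) (.inr (by simpa)),
      Finset.subset_insert _ _, by simp, ?_⟩
    rw [pathChain_inv, pathChain_of]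
    exact neg_mem (Finsupp.single_mem_supported ℤ 1 (by simp))
  | mul g h hg hh =>
    obtain ⟨V₁, E₁, hE₁, hEE₁, hq₁, hsupp₁⟩ := hh hE hq
    obtain ⟨V₂, E₂, hE₂, hEE₂, hq₂, hsupp₂⟩ := hg hE₁ hq₁
    refine ⟨V₂, E₂, hE₂, hEE₁.trans hEE₂, by simpa, ?_⟩
    rw [pathChain_mul]
    exact add_mem (Finsupp.supported_mono (Finset.coe_subset.2 hEE₂) hsupp₁) hsupp₂

variable (ρ) in
lemma exists_isConnectedSubgraph (b : Q) (S : Finset (FreeGroup X)) :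
    ∃ V E, IsConnectedSubgraph ρ b V E ∧
      ∀ g ∈ S, pathChain ρ b g ∈ Finsupp.supported ℤ ℤ (E : Set (Q × X)) := by
  classical
  induction S using Finset.induction_on with
  | empty => exact ⟨{b}, ∅, isConnectedSubgraph_singleton b, by simp⟩
  | insert g S _ ih =>
    obtain ⟨V, E, hE, hS⟩ := ih
    obtain ⟨V', E', hE', hEE', -, hg⟩ := hE.exists_extend_path hE.base_mem g
    refine ⟨V', E', hE', (Finset.forall_mem_insert _ _ _).2 ⟨hg, fun h hh => ?_⟩⟩
    exact Finsupp.supported_mono (Finset.coe_subset.2 hEE') (hS h hh)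

end Subgraph

section Subdivision

/-- The positive words: products of generators without inverses. -/
def positiveWords (X : Type*) : Submonoid (FreeGroup X) :=
  Submonoid.closure (Set.range FreeGroup.of)

lemma of_mem_positiveWords {X : Type*} (x : X) : FreeGroup.of x ∈ positiveWords X :=
  Submonoid.subset_closure ⟨x, rfl⟩

variable {ι X Q : Type*} (ρ : FreeGroup X →* Equiv.Perm Q)

lemma exists_positive_path [DecidableEq Q] {w : FreeGroup X} (hw : w ∈ positiveWords X) (x : X)
    (q : Q) : ∃ P : Finset (Q × X), (q, x) ∈ P ∧
      ∀ e ∈ P, ρ (.of e.2) e.1 ∈ insert (ρ (w * .of x) q) (P.image Prod.fst) := by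
  classical
  rw [positiveWords] at hw
  induction hw using Submonoid.closure_induction_right generalizing x q with
  | one => exact ⟨{(q, x)}, by simp, by simp⟩
  | mul_right w _ y hy ih =>
    obtain ⟨y, rfl⟩ := hy
    obtain ⟨P, hmem, hP⟩ := ih y (ρ (.of x) q)
    refine ⟨insert (q, x) P, by simp, (Finset.forall_mem_insert _ _ _).2 ⟨?_, fun e he => ?_⟩⟩
    · exact Finset.mem_insert_of_mem <| Finset.mem_image.2
        ⟨_, Finset.mem_insert_of_mem hmem, rfl⟩
    · have := hP e he
      simp only [map_mul, Equiv.Perm.mul_apply] at this ⊢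
      exact Finset.insert_subset_insert _
        (Finset.image_subset_image (Finset.subset_insert _ _)) this

variable {ρ} {φ : FreeGroup ι →* FreeGroup X} {l : ι ↪ X} {w : ι → FreeGroup X}

lemma IsSubgraph.exists_subdivision (hw : ∀ i, w i ∈ positiveWords X)
    (hφ : ∀ i, φ (.of i) = w i * .of (l i)) {V : Finset Q} {D : Finset (Q × ι)}
    (hD : IsSubgraph (ρ.comp φ) V D) :
    ∃ W E, IsSubgraph ρ W E ∧ V ⊆ W ∧ W.card + D.card ≤ E.card + V.card := by
  classical
  choose P hP_first hP_target using fun e : Q × ι =>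
    exists_positive_path ρ (hw e.2) (l e.2) e.1
  let E := D.biUnion P
  let W := V ∪ E.image Prod.fst
  have hE : IsSubgraph ρ W E := by
    intro e he
    refine ⟨Finset.mem_union_right _ (Finset.mem_image_of_mem _ he), ?_⟩
    obtain ⟨d, hd, hed⟩ := Finset.mem_biUnion.1 he
    have hd_target := (hD d hd).2
    rw [MonoidHom.comp_apply, hφ] at hd_target
    have hsub := Finset.image_subset_image (f := Prod.fst) (Finset.subset_biUnion_of_mem P hd)
    rcases Finset.mem_insert.1 (hP_target d e hed) with h | h
    · exact Finset.mem_union_left _ (h ▸ hd_target)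
    · exact Finset.mem_union_right _ (hsub h)
  have hD_le : D.card ≤ (E.filter fun e => e.1 ∈ V).card := by
    refine Finset.card_le_card_of_injOn (Prod.map id l) (fun e he => ?_)
      (Function.injective_id.prodMap l.injective).injOn
    exact Finset.mem_filter.2 ⟨Finset.mem_biUnion.2 ⟨e, he, hP_first e⟩, (hD e he).1⟩
  have hW_le : W.card ≤ V.card + (E.filter fun e => e.1 ∉ V).card := by
    have hW : W ⊆ V ∪ (E.filter fun e => e.1 ∉ V).image Prod.fst := by
      intro v
      simp only [W, Finset.mem_union, Finset.mem_image, Finset.mem_filter]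
      grind
    exact (Finset.card_le_card hW).trans <| (Finset.card_union_le _ _).trans <|
      Nat.add_le_add_left Finset.card_image_le _
  have := Finset.card_filter_add_card_filter_not (s := E) (fun e => e.1 ∈ V)
  exact ⟨W, E, hE, Finset.subset_union_left, by omega⟩

end Subdivision

section Inert

variable {ι X : Type u} {φ : FreeGroup ι →* FreeGroup X} {l : ι ↪ X} {w : ι → FreeGroup X}

lemma card_le_card_of_freeGroupBasis_comap (hw : ∀ i, w i ∈ positiveWords X)
    (hφ : ∀ i, φ (.of i) = w i * .of (l i)) {K : Subgroup (FreeGroup X)}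
    {S : Finset (FreeGroup X)} (hS : Subgroup.closure (S : Set (FreeGroup X)) = K) {κ : Type*}
    (B : FreeGroupBasis κ (K.comap φ)) (T : Finset κ) : T.card ≤ S.card := by
  classical
  let ρ := MulAction.toPermHom (FreeGroup X) (FreeGroup X ⧸ K)
  let b : FreeGroup X ⧸ K := (1 : FreeGroup X)
  have hK : K = pointStabilizer ρ b := (MulAction.stabilizer_quotient K).symm
  have hL : K.comap φ = pointStabilizer (ρ.comp φ) b := congrArg (Subgroup.comap φ) hK
  rw [hL] at B
  obtain ⟨V, D, hD, hsupp⟩ :=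
    exists_isConnectedSubgraph (ρ.comp φ) b (T.image fun k => (B k : FreeGroup ι))
  have hlower : T.card + V.card ≤ D.card + 1 := by
    simpa using hD.card_add_card_le (γ := fun k : T => (B k : FreeGroup ι)) (fun k => (B k).2)
      ((linearIndependent_pathChain_basis _ b B).comp _ Subtype.val_injective)
      fun k => hsupp _ (Finset.mem_image_of_mem _ k.2)
  obtain ⟨W, E, hE, hVW, hcard⟩ := hD.isSubgraph.exists_subdivision hw hφ
  have htrans : ∀ v ∈ W, ∃ g, ρ g b = v := fun v _ => MulAction.exists_smul_eq _ b v
  have hupper := hE.card_add_one_le (hVW hD.base_mem) htrans (hS.trans hK)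
  omega

theorem rk_comap_le (hw : ∀ i, w i ∈ positiveWords X) (hφ : ∀ i, φ (.of i) = w i * .of (l i))
    {K : Subgroup (FreeGroup X)} (hK : K.FG) : rk (K.comap φ) ≤ rk K := by
  obtain ⟨S, hS, hcard⟩ := exists_finset_closure_eq_card_eq_rk hK
  obtain ⟨κ, ⟨B⟩⟩ := IsFreeGroup.nonempty_basis (G := K.comap φ)
  rw [← hcard]
  exact (rk_le_mk_of_freeGroupBasis B).trans
    (Cardinal.card_le_of (card_le_card_of_freeGroupBasis_comap hw hφ hS B))

theorem example_subgroup_isInert_general (l : ι ↪ X) (hw : ∀ i, w i ∈ positiveWords X) :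
    IsInert (Subgroup.closure (Set.range fun i => w i * FreeGroup.of (l i))) := by
  intro K hK
  let φ : FreeGroup ι →* FreeGroup X := FreeGroup.lift fun i => w i * FreeGroup.of (l i)
  rw [← FreeGroup.range_lift_eq_closure, ← Subgroup.map_comap_eq]
  exact (rk_map_le φ _).trans (rk_comap_le hw (fun _ => FreeGroup.lift_apply_of) hK)

end Inert

/-- `H = ⟨x²y²x², y²z²y², z²x²y²x²z²⟩` is inert in `F_3`. -/
theorem example_subgroup_isInert : IsInert Hex := by
  let w := ![xx ^ 2 * yy ^ 2 * xx, yy ^ 2 * zz ^ 2 * yy, zz ^ 2 * xx ^ 2 * yy ^ 2 * xx ^ 2 * zz]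
  have hw : ∀ i, w i ∈ positiveWords (Fin 3) := by
    have hx : xx ∈ positiveWords (Fin 3) := of_mem_positiveWords 0
    have hy : yy ∈ positiveWords (Fin 3) := of_mem_positiveWords 1
    have hz : zz ∈ positiveWords (Fin 3) := of_mem_positiveWords 2
    intro i
    fin_cases i <;> simp only [w] <;> apply_rules [mul_mem, pow_mem]
  have hHex : Hex = Subgroup.closure (Set.range fun i => w i * FreeGroup.of i) := by
    rw [Hex]
    congr 1
    ext g
    simp [w, Fin.exists_fin_succ, xx, yy, zz, pow_two, mul_assoc, eq_comm]
  rw [hHex]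
  exact example_subgroup_isInert_general (.refl _) hw
end

section
/- Let F_3 be the free group with free basis {x, y, z} and let H = ⟨x²y²x², y²z²y², z²x²y²x²z²⟩. If g ∈ F_3 and g^i ∈ H for some integer i ≥ 1, then g ∈ ⟨x², y², z²⟩. -/
/-!
A word with two distinct consecutive generators is synchronizing for the Stallings graph of
`⟨a² : a ∈ α⟩`: all paths labelled by it end at the same vertex. If a power of such a word labels a
loop, so does the word itself. Applied to the cyclic reduction, this shows that an element with a
power in `⟨a² : a ∈ α⟩` lies in this subgroup unless it is conjugate to a power of a generator.
Finally, `Hex` fixes `0` in an action of `F_3` on `ℤ` in which every generator is conjugate to a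
nontrivial translation, so `Hex` contains no conjugate of a nontrivial power of a generator.
-/

section FoldedGraph

variable {α V : Type*}

/-- A family `f : α → V ≃. V` encodes a folded (Stallings) graph on the vertices `V`, with an edge
`v → w` labelled `a` when `w ∈ f a v`. This is the action on vertices of a signed letter, where
`(a, false)` traverses the edges labelled `a` backwards. -/
def readLetter (f : α → V ≃. V) (l : α × Bool) : V ≃. V :=
  if l.2 then f l.1 else (f l.1).symm

/-- The action of a word on the vertices of the folded graph `f`: a vertex is sent to the end of the
path labelled by the word, read from left to right, if that path exists. -/
def readWord (f : α → V ≃. V) : List (α × Bool) → (V ≃. V)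
  | [] => PEquiv.refl V
  | l :: L => (readLetter f l).trans (readWord f L)

variable {f : α → V ≃. V}

theorem readLetter_inv (a : α) (b : Bool) : readLetter f (a, !b) = (readLetter f (a, b)).symm := by
  cases b <;> rfl

theorem readWord_append (L M : List (α × Bool)) :
    readWord f (L ++ M) = (readWord f L).trans (readWord f M) := by
  induction L with
  | nil => exact (PEquiv.refl_trans _).symm
  | cons l L ih => rw [List.cons_append, readWord, readWord, ih, PEquiv.trans_assoc]

theorem readWord_invRev (L : List (α × Bool)) :
    readWord f (FreeGroup.invRev L) = (readWord f L).symm := by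
  induction L with
  | nil => rfl
  | cons l L ih =>
    rw [FreeGroup.invRev_cons, readWord_append, ih, readWord, PEquiv.symm_trans_rev]
    simp only [FreeGroup.invRev, List.map_cons, List.map_nil, List.reverse_singleton, readWord,
      PEquiv.trans_refl, readLetter_inv]

theorem readWord_le_of_red {L M : List (α × Bool)} (h : FreeGroup.Red L M) :
    readWord f L ≤ readWord f M := by
  induction h with
  | refl => exact le_rfl
  | tail _ hstep ih =>
    refine ih.trans ?_
    cases hstep with
    | @not L₁ L₂ a b =>
      intro v w hw
      simp only [readWord_append, readWord, PEquiv.mem_trans, readLetter_inv,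
        PEquiv.mem_iff_mem] at hw ⊢
      obtain ⟨p, hvp, q, hpq, r, hrq, hrw⟩ := hw
      exact ⟨p, hvp, (readLetter f (a, b)).inj hrq hpq ▸ hrw⟩

theorem mem_readWord_toWord_of_mem_closure [DecidableEq α] {S : Set (FreeGroup α)} {v : V}
    (hS : ∀ s ∈ S, v ∈ readWord f s.toWord v) {g : FreeGroup α} (hg : g ∈ Subgroup.closure S) :
    v ∈ readWord f g.toWord v := by
  induction hg using Subgroup.closure_induction with
  | mem s hs => exact hS s hs
  | one => rw [FreeGroup.toWord_one]; rfl
  | mul g h _ _ hg hh =>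
    rw [FreeGroup.toWord_mul]
    refine readWord_le_of_red FreeGroup.reduce.red v v ?_
    rw [readWord_append, PEquiv.mem_trans]
    exact ⟨v, hg, hh⟩
  | inv g _ hg => rwa [FreeGroup.toWord_inv, readWord_invRev, PEquiv.mem_iff_mem]

theorem mem_readWord_conj_iff {u c : List (α × Bool)} {v : V} :
    v ∈ readWord f (u ++ c ++ FreeGroup.invRev u) v ↔
      ∃ w ∈ readWord f u v, w ∈ readWord f c w := by
  simp only [readWord_append, readWord_invRev, PEquiv.mem_trans, PEquiv.mem_iff_mem]
  constructor
  · rintro ⟨p, ⟨w, hvw, hwp⟩, hvp⟩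
    obtain rfl := Option.mem_unique hvw hvp
    exact ⟨w, hvw, hwp⟩
  · rintro ⟨w, hvw, hww⟩
    exact ⟨w, ⟨w, hvw, hww⟩, hvw⟩

theorem mul_mk_mul_inv_mem_of_mem_readWord {K : Subgroup (FreeGroup α)} {rep : V → FreeGroup α}
    (hrep : ∀ a v, ∀ w ∈ f a v, rep v * FreeGroup.of a * (rep w)⁻¹ ∈ K)
    {L : List (α × Bool)} {v w : V} (h : w ∈ readWord f L v) :
    rep v * FreeGroup.mk L * (rep w)⁻¹ ∈ K := by
  induction L generalizing v with
  | nil =>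
    obtain rfl : v = w := Option.some_inj.1 h
    simp [← FreeGroup.one_eq_mk]
  | cons l L ih =>
    obtain ⟨p, hvp, hpw⟩ := (PEquiv.mem_trans _ _ _ _).1 h
    have hl : rep v * FreeGroup.mk [l] * (rep p)⁻¹ ∈ K := by
      obtain ⟨a, _ | _⟩ := l
      · have hinv := inv_mem (hrep a p v ((PEquiv.mem_iff_mem _).1 hvp))
        rwa [mul_inv_rev, mul_inv_rev, inv_inv, ← mul_assoc] at hinv
      · exact hrep a v p hvp
    have hsplit : FreeGroup.mk (l :: L) = FreeGroup.mk [l] * FreeGroup.mk L := by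
      rw [FreeGroup.mul_mk, List.singleton_append]
    rw [hsplit]
    convert mul_mem hl (ih hpw) using 1
    group

variable (f) in
/-- A word is synchronizing for the folded graph `f` if all paths labelled by it, from whichever
vertices they start, have the same end. It need not label any path. -/
def IsSynchronizing (L : List (α × Bool)) : Prop :=
  ∀ ⦃v v' w w' : V⦄, w ∈ readWord f L v → w' ∈ readWord f L v' → w = w'

theorem IsSynchronizing.mem_readWord_of_flatten_replicate {c : List (α × Bool)}
    (hc : IsSynchronizing f c) {n : ℕ} (hn : n ≠ 0) {v : V}
    (h : v ∈ readWord f (List.replicate n c).flatten v) :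
    v ∈ readWord f c v := by
  obtain ⟨k, rfl⟩ := Nat.exists_eq_succ_of_ne_zero hn
  have hfirst := h
  rw [List.replicate_succ, List.flatten_cons, readWord_append, PEquiv.mem_trans] at hfirst
  rw [List.replicate_succ', List.flatten_concat, readWord_append, PEquiv.mem_trans] at h
  obtain ⟨w, hvw, -⟩ := hfirst
  obtain ⟨u, -, huv⟩ := h
  rwa [hc hvw huv] at hvw

end FoldedGraph

section Squares

variable {α : Type*}

theorem exists_eq_replicate_of_isReduced_of_isChain {c : List (α × Bool)} (hne : c ≠ [])
    (hred : FreeGroup.IsReduced c) (hc : c.IsChain fun l l' => l.1 = l'.1) :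
    ∃ n l, c = List.replicate n l := by
  have hconst : c.IsChain (· = ·) := by
    rw [FreeGroup.IsReduced, List.isChain_iff_forall_rel_of_append_cons_cons] at hred
    rw [List.isChain_iff_forall_rel_of_append_cons_cons] at hc ⊢
    exact fun _ _ _ _ h => Prod.ext (hc h) (hred h (hc h))
  obtain ⟨l, L, rfl⟩ := List.exists_cons_of_ne_nil hne
  exact ⟨_, l, by rw [List.isChain_cons_eq_iff_eq_replicate.1 hconst, ← List.replicate_succ]⟩

theorem exists_mk_replicate_eq_zpow (n : ℕ) (l : α × Bool) :
    ∃ m : ℤ, FreeGroup.mk (List.replicate n l) = FreeGroup.of l.1 ^ m := by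
  have hpow : FreeGroup.mk (List.replicate n l) = FreeGroup.mk [l] ^ n := by
    rw [FreeGroup.pow_mk, List.flatten_replicate_singleton]
  obtain ⟨a, _ | _⟩ := l
  · exact ⟨-n, by rw [hpow, zpow_neg, zpow_natCast, ← inv_pow]; rfl⟩
  · exact ⟨n, by rw [hpow, zpow_natCast]; rfl⟩

variable (α) in
/-- The subgroup generated by the squares of the free generators. -/
def squaresSubgroup : Subgroup (FreeGroup α) :=
  Subgroup.closure (Set.range fun a => FreeGroup.of a ^ 2)

theorem sq_mem_squaresSubgroup (a : α) : FreeGroup.of a ^ 2 ∈ squaresSubgroup α :=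
  Subgroup.subset_closure ⟨a, rfl⟩

variable [DecidableEq α]

/-- The Stallings graph of `squaresSubgroup α`: the base vertex `none` is joined to each vertex
`some a` by two edges labelled `a`, one in each direction. -/
def squaresGraph (a : α) : Option α ≃. Option α where
  toFun v := if v = none then some (some a) else if v = some a then some none else none
  invFun v := if v = none then some (some a) else if v = some a then some none else none
  inv v w := by grind

theorem mem_squaresGraph_iff {a : α} {v w : Option α} :
    w ∈ squaresGraph a v ↔ v = none ∧ w = some a ∨ v = some a ∧ w = none := by
  change (if v = none then some (some a) else if v = some a then some none else none) = some w ↔ _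
  grind

theorem squaresGraph_symm (a : α) : (squaresGraph a).symm = squaresGraph a :=
  rfl

theorem readLetter_squaresGraph (l : α × Bool) :
    readLetter squaresGraph l = squaresGraph l.1 := by
  rw [readLetter, squaresGraph_symm, ite_self]

theorem mem_squaresSubgroup_iff {g : FreeGroup α} :
    g ∈ squaresSubgroup α ↔ none ∈ readWord squaresGraph g.toWord none := by
  constructor
  · refine mem_readWord_toWord_of_mem_closure ?_
    rintro _ ⟨a, rfl⟩
    simp only [FreeGroup.toWord_of_pow, List.replicate, readWord, PEquiv.trans_refl,
      PEquiv.mem_trans, readLetter_squaresGraph, mem_squaresGraph_iff]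
    exact ⟨some a, by simp⟩
  · intro h
    have hrep (a : α) (v : Option α) : ∀ w ∈ squaresGraph a v,
        v.elim 1 FreeGroup.of * FreeGroup.of a * (w.elim 1 FreeGroup.of)⁻¹
          ∈ squaresSubgroup α := by
      intro w hw
      obtain ⟨rfl, rfl⟩ | ⟨rfl, rfl⟩ := mem_squaresGraph_iff.1 hw
      · simp
      · simpa [pow_two] using sq_mem_squaresSubgroup a
    simpa [FreeGroup.mk_toWord] using mul_mk_mul_inv_mem_of_mem_readWord hrep h

theorem isSynchronizing_squaresGraph {c : List (α × Bool)}
    (hc : ¬ c.IsChain fun l l' => l.1 = l'.1) : IsSynchronizing squaresGraph c := by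
  rw [List.isChain_iff_forall_rel_of_append_cons_cons] at hc
  push Not at hc
  obtain ⟨l, l', d, e, rfl, hne⟩ := hc
  have hnone {p q : Option α} (h : q ∈ readWord squaresGraph (d ++ l :: l' :: e) p) :
      q ∈ readWord squaresGraph (l' :: e) none := by
    simp only [readWord_append, readWord, PEquiv.mem_trans, readLetter_squaresGraph,
      mem_squaresGraph_iff] at h ⊢
    grind
  exact fun _ _ _ _ hw hw' => Option.mem_unique (hnone hw) (hnone hw')

end Squares

theorem mem_squaresSubgroup_or_isConj_of_pow_mem {α : Type*} {g : FreeGroup α} {n : ℕ} (hn : n ≠ 0)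
    (hg : g ^ n ∈ squaresSubgroup α) :
    g ∈ squaresSubgroup α ∨ ∃ (a : α) (m : ℤ), IsConj (FreeGroup.of a ^ m) g := by
  classical
  have hred : FreeGroup.IsReduced g.toWord := FreeGroup.isReduced_toWord
  have hword := FreeGroup.reduceCyclically.conj_conjugator_reduceCyclically g.toWord
  have hcred := (FreeGroup.reduceCyclically.isCyclicallyReduced hred).isReduced
  rw [mem_squaresSubgroup_iff, FreeGroup.toWord_pow,
    FreeGroup.reduceCyclically.reduce_flatten_replicate hred, if_neg hn] at hg
  set u := FreeGroup.reduceCyclically.conjugator g.toWord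
  set c := FreeGroup.reduceCyclically g.toWord
  by_cases hc : c.IsChain fun l l' => l.1 = l'.1
  · have hconj : FreeGroup.mk u * FreeGroup.mk c * (FreeGroup.mk u)⁻¹ = g := by
      rw [FreeGroup.inv_mk, FreeGroup.mul_mk, FreeGroup.mul_mk, hword, FreeGroup.mk_toWord]
    by_cases hnil : c = []
    · left
      rw [← hconj, hnil, ← FreeGroup.one_eq_mk, mul_one, mul_inv_cancel]
      exact one_mem _
    · obtain ⟨k, l, hkl⟩ := exists_eq_replicate_of_isReduced_of_isChain hnil hcred hc
      obtain ⟨m, hm⟩ := exists_mk_replicate_eq_zpow k l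
      exact .inr ⟨l.1, m, isConj_iff.2 ⟨FreeGroup.mk u, by rw [← hm, ← hkl, hconj]⟩⟩
  · left
    obtain ⟨p, hup, hp⟩ := mem_readWord_conj_iff.1 hg
    rw [mem_squaresSubgroup_iff, ← hword, mem_readWord_conj_iff]
    exact ⟨p, hup, (isSynchronizing_squaresGraph hc).mem_readWord_of_flatten_replicate hn hp⟩

section TranslationAction

theorem eq_zero_of_isConj_addRight_of_zpow_apply_eq {A : Type*} [AddGroup A]
    [IsAddTorsionFree A] {k : A} (hk : k ≠ 0) {σ : Equiv.Perm A}
    (hσ : IsConj (Equiv.addRight k) σ) {m : ℤ} {x : A} (h : (σ ^ m) x = x) : m = 0 := by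
  obtain ⟨τ, rfl⟩ := isConj_iff.1 hσ
  rw [conj_zpow, Equiv.zsmul_addRight, Equiv.Perm.mul_apply, Equiv.Perm.mul_apply,
    ← Equiv.Perm.eq_inv_iff_eq, Equiv.coe_addRight, add_eq_left] at h
  exact (IsAddTorsionFree.zsmul_eq_zero_iff_left hk).1 h

/-- An action of `F_3` on `ℤ` in which every generator is conjugate to a translation and `Hex`
fixes `0`. The conjugating swaps are chosen so that the squares of the generators move `0` along the
loops `0, 2, -2, 0` (for `x²y²x²`), `0, 2, 4, 0` (for `y²z²y²`) and `0, -2, 0, 2, 4, 0` (for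
`z²x²y²x²z²`). -/
def hexAction : FreeGroup (Fin 3) →* Equiv.Perm ℤ :=
  FreeGroup.lift ![Equiv.addRight 1,
    Equiv.swap 0 2 * Equiv.addRight (-1) * (Equiv.swap 0 2)⁻¹,
    Equiv.swap 2 4 * Equiv.addRight (-1) * (Equiv.swap 2 4)⁻¹]

theorem exists_isConj_addRight_hexAction_of (a : Fin 3) :
    ∃ k : ℤ, k ≠ 0 ∧ IsConj (Equiv.addRight k) (hexAction (FreeGroup.of a)) := by
  rw [hexAction, FreeGroup.lift_apply_of]
  fin_cases a
  · exact ⟨1, by decide, IsConj.refl _⟩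
  · exact ⟨-1, by decide, isConj_iff.2 ⟨_, rfl⟩⟩
  · exact ⟨-1, by decide, isConj_iff.2 ⟨_, rfl⟩⟩

theorem hexAction_apply_zero_of_mem_hex {h : FreeGroup (Fin 3)} (hh : h ∈ Hex) :
    hexAction h 0 = 0 := by
  have hle : Hex ≤ (MulAction.stabilizer (Equiv.Perm ℤ) (0 : ℤ)).comap hexAction := by
    rw [Hex, Subgroup.closure_le]
    rintro s (rfl | rfl | rfl) <;>
      simp [hexAction, xx, yy, zz, pow_two, Equiv.swap_apply_def, MulAction.mem_stabilizer_iff]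
  exact hle hh

theorem eq_zero_of_isConj_zpow_of_mem_hex {h : FreeGroup (Fin 3)} (hh : h ∈ Hex) {a : Fin 3}
    {m : ℤ} (hconj : IsConj (FreeGroup.of a ^ m) h) : m = 0 := by
  obtain ⟨u, rfl⟩ := isConj_iff.1 hconj
  obtain ⟨k, hk, ha⟩ := exists_isConj_addRight_hexAction_of a
  refine eq_zero_of_isConj_addRight_of_zpow_apply_eq hk ha (x := (hexAction u)⁻¹ 0) ?_
  rw [Equiv.Perm.eq_inv_iff_eq]
  simpa only [map_mul, map_inv, map_zpow, Equiv.Perm.mul_apply] using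
    hexAction_apply_zero_of_mem_hex hh

end TranslationAction

theorem squaresSubgroup_fin_three :
    squaresSubgroup (Fin 3) = Subgroup.closure {xx ^ 2, yy ^ 2, zz ^ 2} := by
  rw [squaresSubgroup]
  congr 1
  ext g
  simp [Fin.exists_fin_succ, xx, yy, zz, eq_comm]

theorem hex_le_squaresSubgroup : Hex ≤ squaresSubgroup (Fin 3) := by
  have hx : xx ^ 2 ∈ squaresSubgroup (Fin 3) := sq_mem_squaresSubgroup 0
  have hy : yy ^ 2 ∈ squaresSubgroup (Fin 3) := sq_mem_squaresSubgroup 1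
  have hz : zz ^ 2 ∈ squaresSubgroup (Fin 3) := sq_mem_squaresSubgroup 2
  rw [Hex, Subgroup.closure_le]
  rintro s (rfl | rfl | rfl)
  · exact mul_mem (mul_mem hx hy) hx
  · exact mul_mem (mul_mem hy hz) hy
  · exact mul_mem (mul_mem (mul_mem (mul_mem hz hx) hy) hx) hz

/-- If `gⁱ ∈ H = ⟨x²y²x², y²z²y², z²x²y²x²z²⟩` for some `i ≥ 1`, then `g ∈ ⟨x², y², z²⟩`. -/
theorem example_root_mem (g : FreeGroup (Fin 3)) (i : ℕ) (hi : 1 ≤ i) (hg : g ^ i ∈ Hex) :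
    g ∈ Subgroup.closure {xx^2, yy^2, zz^2} := by
  have hi0 : i ≠ 0 := Nat.one_le_iff_ne_zero.1 hi
  rw [← squaresSubgroup_fin_three]
  obtain hmem | ⟨a, m, hconj⟩ :=
    mem_squaresSubgroup_or_isConj_of_pow_mem hi0 (hex_le_squaresSubgroup hg)
  · exact hmem
  · have hpow : IsConj (FreeGroup.of a ^ (m * i)) (g ^ i) := by
      rw [zpow_mul, zpow_natCast]
      exact hconj.pow i
    have hmi : m * i = 0 := eq_zero_of_isConj_zpow_of_mem_hex hg hpow
    have hm : m = 0 := (mul_eq_zero.1 hmi).resolve_right (Nat.cast_ne_zero.2 hi0)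
    obtain rfl : 1 = g := by simpa [hm] using hconj
    exact one_mem _
end
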